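/- Under the zero-loss hypothesis, the (unthickened) foregrounds F(P) and F(G) of the prediction and the ground truth are homotopy equivalent topological spaces (with the subspace topology from ℝ²). -/

import Mathlib

open Set Metric

noncomputable section

/-- The plane modeled as `Fin 2 → ℝ` with the Pi (sup) norm. -/
abbrev Plane : Type := Fin 2 → ℝ

/-- The Euclidean plane (for Euclidean-norm disks and annuli). -/
abbrev EPlane : Type := EuclideanSpace ℝ (Fin 2)

/-- The closed unit pixel `[i-1,i] × [j-1,j]` for a pixel index `(i,j)`. -/
def pixel (p : ℕ × ℕ) : Set Plane :=
  {x | x 0 ∈ Set.Icc ((p.1 : ℝ) - 1) (p.1 : ℝ) ∧ x 1 ∈ Set.Icc ((p.2 : ℝ) - 1) (p.2 : ℝ)}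

/-- A binary image `S` lies on the `h × w` grid `{1,…,h} × {1,…,w}`. -/
def OnGrid (S : Set (ℕ × ℕ)) (h w : ℕ) : Prop :=
  S ⊆ Set.Icc 1 h ×ˢ Set.Icc 1 w

/-- The foreground `F(S)` of a binary image. -/
def fg (S : Set (ℕ × ℕ)) : Set Plane := ⋃ p ∈ S, pixel p

/-- Closed `ε`-thickening `D_ε(X)` with respect to the sup norm. -/
def thick (ε : ℝ) (X : Set Plane) : Set Plane := {y | ∃ x ∈ X, ‖x - y‖ ≤ ε}

/-- `C` is a connected component of `A` (as a subset of the plane). -/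
def IsCompOf (C A : Set Plane) : Prop := ∃ x ∈ A, C = connectedComponentIn A x

/-- Two subsets share a boundary edge if their closures intersect in an infinite set. -/
def SharesEdge (C D : Set Plane) : Prop := (closure C ∩ closure D).Infinite

/-- `X` strongly deformation retracts onto `A`. -/
def SDR (X A : Set Plane) : Prop :=
  ∃ H : C(↥X × unitInterval, ↥X),
    (∀ x, H (x, 0) = x) ∧ (∀ x, ((H (x, 1) : Plane)) ∈ A) ∧
    (∀ a : ↥X, (a : Plane) ∈ A → ∀ t, H (a, t) = a)

def TPset (P G : Set (ℕ × ℕ)) (ε : ℝ) : Set Plane := thick ε (fg P) ∩ thick (2 * ε) (fg G)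
def TNset (P G : Set (ℕ × ℕ)) (ε : ℝ) : Set Plane := (thick ε (fg P))ᶜ ∩ (thick (2 * ε) (fg G))ᶜ
def FPset (P G : Set (ℕ × ℕ)) (ε : ℝ) : Set Plane := thick ε (fg P) ∩ (thick (2 * ε) (fg G))ᶜ
def FNset (P G : Set (ℕ × ℕ)) (ε : ℝ) : Set Plane := (thick ε (fg P))ᶜ ∩ thick (2 * ε) (fg G)

/-- A component `C` (of `FP` or `FN`) is regular: exactly one component of `TP` and exactly
one component of `TN` share a boundary edge with it. -/
def RegularComp (P G : Set (ℕ × ℕ)) (ε : ℝ) (C : Set Plane) : Prop :=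
  (∃! T : Set Plane, IsCompOf T (TPset P G ε) ∧ SharesEdge T C) ∧
  (∃! T : Set Plane, IsCompOf T (TNset P G ε) ∧ SharesEdge T C)

/-- The zero-loss hypothesis: every component of `FP` and every component of `FN` is regular. -/
def ZeroLoss (P G : Set (ℕ × ℕ)) (ε : ℝ) : Prop :=
  (∀ C : Set Plane, IsCompOf C (FPset P G ε) → RegularComp P G ε C) ∧
  (∀ C : Set Plane, IsCompOf C (FNset P G ε) → RegularComp P G ε C)

/-!
As `ε < 1 / 4`, the numbers `k ± ε` and `k ± 2 ε` with `k` an integer subdivide the plane into a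
grid, and the two thickened foregrounds are unions of cells, that is, digital images `A` and `B` on
this grid. The distinct radii `ε` and `2 ε` keep boundary edges of `A` and of `B` off a common grid
line, so that the components of all four overlap sets are governed by 4-adjacency of cells.
Regularity of the components of `FP` then says that the inclusion of `A ∩ B` in `A` induces
bijections on the components of the foregrounds and of the backgrounds; regularity of the
components of `FN` says the same about `A ∩ B` and `B`.

Let `Q` be included in a finite image `X` in this way. If every pixel of `X` outside `Q` were not
simple, then by the Jordan curve theorem removing such a pixel on the boundary of `X` would
disconnect two of its neighbours; the two parts both meet `Q`, since a part free of `Q` could be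
split further, and this contradicts the injectivity on foreground components. So as long as
`X ≠ Q` there is a simple pixel outside `Q`. Its square can be collapsed to an arc of its
boundary, and removing it preserves the hypotheses on `Q` and `X`. Hence `A` and `B` both have
the homotopy type of `A ∩ B`, and thickening a foreground does not change its homotopy type.
-/

namespace DigitalTopology

section Homotopy

variable {E : Type*} [AddCommGroup E] [Module ℝ E] [TopologicalSpace E]
  [IsTopologicalAddGroup E] [ContinuousSMul ℝ E]

theorem homotopic_id_of_segment_subset {X : Set E} (k : C(X, X))
    (hk : ∀ x : X, segment ℝ (k x : E) (x : E) ⊆ X) :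
    ContinuousMap.Homotopic k (ContinuousMap.id X) := by
  let inclusion : C(X, E) := ⟨Subtype.val, continuous_subtype_val⟩
  let H := ContinuousMap.Homotopy.affine (inclusion.comp k) inclusion
  have H_mem : ∀ w, H w ∈ X := fun w ↦
    hk w.2 (by
      rw [segment_eq_image_lineMap]
      exact ⟨w.1, w.1.2, rfl⟩)
  exact ⟨{
    toFun := fun w ↦ ⟨H w, H_mem w⟩
    continuous_toFun := H.continuous.subtype_mk H_mem
    map_zero_left := fun x ↦ Subtype.ext (H.apply_zero x)
    map_one_left := fun x ↦ Subtype.ext (H.apply_one x) }⟩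

theorem homotopyEquiv_of_segment_subset {X Y : Set E} (f g : E → E)
    (hf : ContinuousOn f X) (hg : ContinuousOn g Y) (hfX : MapsTo f X Y) (hgY : MapsTo g Y X)
    (hX : ∀ x ∈ X, segment ℝ (g (f x)) x ⊆ X) (hY : ∀ y ∈ Y, segment ℝ (f (g y)) y ⊆ Y) :
    Nonempty (ContinuousMap.HomotopyEquiv X Y) :=
  ⟨{ toFun := ⟨hfX.restrict, hf.mapsToRestrict hfX⟩
     invFun := ⟨hgY.restrict, hg.mapsToRestrict hgY⟩
     left_inv := homotopic_id_of_segment_subset _ fun x ↦ hX x x.2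
     right_inv := homotopic_id_of_segment_subset _ fun y ↦ hY y y.2 }⟩

theorem homotopyEquiv_union_of_convex_retraction {C Y : Set E} (hC : Convex ℝ C)
    (hC_closed : IsClosed C) (hY : IsClosed Y) {r : E → E} (hr : ContinuousOn r C)
    (hr_mem : MapsTo r C (C ∩ Y)) (hr_fix : ∀ z ∈ C ∩ Y, r z = z) :
    Nonempty (ContinuousMap.HomotopyEquiv ↥(C ∪ Y) Y) := by
  classical
  let f : E → E := fun z ↦ if z ∈ C then r z else z
  have f_eq_r : EqOn f r C := fun z hz ↦ if_pos hz
  have f_eq_id : EqOn f id Y := fun z hz ↦ by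
    by_cases hzC : z ∈ C
    · exact (if_pos hzC).trans (hr_fix z ⟨hzC, hz⟩)
    · exact if_neg hzC
  refine homotopyEquiv_of_segment_subset f id
    ((hr.congr f_eq_r).union_of_isClosed (continuousOn_id.congr f_eq_id) hC_closed hY)
    continuousOn_id ?_ (fun z hz ↦ Or.inr hz) ?_ ?_
  · rintro z (hz | hz)
    · rw [f_eq_r hz]
      exact (hr_mem hz).2
    · rwa [f_eq_id hz]
  · rintro z (hz | hz)
    · rw [f_eq_r hz]
      exact (hC.segment_subset (hr_mem hz).1 hz).trans subset_union_left
    · rw [f_eq_id hz, id, id, segment_same]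
      exact singleton_subset_iff.2 (Or.inr hz)
  · intro z hz
    rw [id, f_eq_id hz, id, segment_same]
    exact singleton_subset_iff.2 hz

theorem homotopyEquiv_biUnion_of_convex {ι : Type*} {S : Set ι} {C D : ι → Set E}
    (hC : ∀ i ∈ S, Convex ℝ (C i)) (hD : ∀ i ∈ S, Convex ℝ (D i)) {f g : E → E}
    (hf : Continuous f) (hg : Continuous g) (hfC : ∀ i ∈ S, MapsTo f (C i) (D i))
    (hgD : ∀ i ∈ S, MapsTo g (D i) (C i)) :
    Nonempty (ContinuousMap.HomotopyEquiv ↥(⋃ i ∈ S, C i) ↥(⋃ i ∈ S, D i)) := by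
  refine homotopyEquiv_of_segment_subset f g hf.continuousOn hg.continuousOn
    (fun x hx ↦ ?_) (fun y hy ↦ ?_) (fun x hx ↦ ?_) (fun y hy ↦ ?_)
  · obtain ⟨i, hi, hxi⟩ := mem_iUnion₂.1 hx
    exact mem_biUnion hi (hfC i hi hxi)
  · obtain ⟨i, hi, hyi⟩ := mem_iUnion₂.1 hy
    exact mem_biUnion hi (hgD i hi hyi)
  · obtain ⟨i, hi, hxi⟩ := mem_iUnion₂.1 hx
    exact ((hC i hi).segment_subset (hgD i hi (hfC i hi hxi)) hxi).trans
      (subset_biUnion_of_mem (u := C) hi)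
  · obtain ⟨i, hi, hyi⟩ := mem_iUnion₂.1 hy
    exact ((hD i hi).segment_subset (hfC i hi (hgD i hi hyi)) hyi).trans
      (subset_biUnion_of_mem (u := D) hi)

end Homotopy

section Paths

variable {α β : Type*} {r r' : α → α → Prop} {S T : Set α} {a b c : α}

/-- `PathIn r S a b`: the points `a` and `b` are joined by a path of `r`-steps all of whose points
lie in `S`. The constant path is allowed at every point, even outside `S`. -/
def PathIn (r : α → α → Prop) (S : Set α) : α → α → Prop :=
  Relation.ReflTransGen fun x y ↦ x ∈ S ∧ y ∈ S ∧ r x y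

namespace PathIn

theorem refl (a : α) : PathIn r S a a := Relation.ReflTransGen.refl

theorem single (ha : a ∈ S) (hb : b ∈ S) (h : r a b) : PathIn r S a b :=
  Relation.ReflTransGen.single ⟨ha, hb, h⟩

theorem trans (hab : PathIn r S a b) (hbc : PathIn r S b c) : PathIn r S a c :=
  Relation.ReflTransGen.trans hab hbc

theorem symm (hr : ∀ x y, r x y → r y x) (h : PathIn r S a b) : PathIn r S b a :=
  Relation.ReflTransGen.mono (fun x y ⟨hy, hx, hyx⟩ ↦ ⟨hx, hy, hr y x hyx⟩) _ _ h.swap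

theorem map {r' : β → β → Prop} {T : Set β} {f : α → β} (hf : MapsTo f S T)
    (hr : ∀ x y, r x y → r' (f x) (f y)) (h : PathIn r S a b) : PathIn r' T (f a) (f b) :=
  h.lift f fun x y ⟨hx, hy, hxy⟩ ↦ ⟨hf hx, hf hy, hr x y hxy⟩

theorem mono_rel (hr : ∀ x y, r x y → r' x y) (h : PathIn r S a b) : PathIn r' S a b :=
  h.map (f := id) (mapsTo_id S) hr

theorem mono (hST : S ⊆ T) (h : PathIn r S a b) : PathIn r T a b :=
  h.map (f := id) hST fun _ _ hxy ↦ hxy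

theorem mem (h : PathIn r S a b) (ha : a ∈ S) : b ∈ S :=
  h.head_induction_on (motive := fun x _ ↦ x ∈ S → b ∈ S) id (fun hxy _ ih _ ↦ ih hxy.2.1) ha

theorem exists_exit (h : PathIn r S a b) (ha : a ∈ T) (hb : b ∉ T) :
    ∃ x ∈ S, x ∈ T ∧ ∃ y ∉ T, r x y := by
  by_contra! hcon
  refine hb ?_
  clear hb
  induction h with
  | refl => exact ha
  | tail _ hxy ih => exact not_not.1 fun hy ↦ hcon _ hxy.1 ih _ hy hxy.2.2

/-- A path through `S ∪ F` between points of `S` can avoid `F`: each excursion into `F` leaves and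
re-enters `S` through `L`, where it is replaced by a path inside `L`. -/
theorem reroute {F L : Set α} (hr : ∀ x y, r x y → r y x) (hLS : L ⊆ S)
    (hF : ∀ x ∈ S, ∀ y ∈ F, r x y → x ∈ L)
    (hL : ∀ y ∈ F, ∀ y' ∈ F, PathIn r F y y' → ∀ x ∈ L, ∀ x' ∈ L, r x y → r x' y' →
      PathIn r L x x')
    (ha : a ∉ F) (hb : b ∈ S) (h : PathIn r (S ∪ F) a b) : PathIn r S a b := by
  have key : (b ∈ S → PathIn r S a b) ∧
      (b ∈ F → ∃ y ∈ F, PathIn r F y b ∧ ∃ x ∈ L, r x y ∧ PathIn r S a x) := by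
    clear hb
    induction h with
    | refl => exact ⟨fun _ ↦ refl a, fun h ↦ (ha h).elim⟩
    | @tail u v _ huv ih =>
      obtain ⟨hu | hu, -, huv⟩ := huv
      · refine ⟨fun hvS ↦ (ih.1 hu).trans (single hu hvS huv), fun hvF ↦ ?_⟩
        exact ⟨v, hvF, refl v, u, hF u hu v hvF huv, huv, ih.1 hu⟩
      · obtain ⟨y, hy, hyu, x, hx, hxy, hax⟩ := ih.2 hu
        refine ⟨fun hvS ↦ ?_, fun hvF ↦ ⟨y, hy, hyu.trans (single hu hvF huv), x, hx, hxy, hax⟩⟩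
        have hvu := hr u v huv
        exact hax.trans ((hL y hy u hu hyu x hx v (hF v hvS u hu hvu) hxy hvu).mono hLS)
  exact key.1 hb

end PathIn

end Paths

section Adjacency

/-- 4-adjacency of pixels: `a` and `b` have a common edge. -/
def Adj4 (a b : ℤ × ℤ) : Prop :=
  (a.1 = b.1 ∧ (b.2 = a.2 + 1 ∨ a.2 = b.2 + 1)) ∨ (a.2 = b.2 ∧ (b.1 = a.1 + 1 ∨ a.1 = b.1 + 1))

/-- 8-adjacency of pixels: the closed squares `a` and `b` meet. In contrast to `Adj4` it is
reflexive. -/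
def Adj8 (a b : ℤ × ℤ) : Prop :=
  a.1 ≤ b.1 + 1 ∧ b.1 ≤ a.1 + 1 ∧ a.2 ≤ b.2 + 1 ∧ b.2 ≤ a.2 + 1

theorem Adj4.symm {a b : ℤ × ℤ} (h : Adj4 a b) : Adj4 b a := by
  unfold Adj4 at *; omega

theorem Adj8.symm {a b : ℤ × ℤ} (h : Adj8 a b) : Adj8 b a := by
  unfold Adj8 at *; omega

theorem Adj4.adj8 {a b : ℤ × ℤ} (h : Adj4 a b) : Adj8 a b := by
  unfold Adj4 Adj8 at *; omega

theorem PathIn.symm4 {S : Set (ℤ × ℤ)} {a b : ℤ × ℤ} (h : PathIn Adj4 S a b) :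
    PathIn Adj4 S b a :=
  h.symm fun _ _ ↦ Adj4.symm

theorem PathIn.symm8 {S : Set (ℤ × ℤ)} {a b : ℤ × ℤ} (h : PathIn Adj8 S a b) :
    PathIn Adj8 S b a :=
  h.symm fun _ _ ↦ Adj8.symm

theorem PathIn.adj8 {S : Set (ℤ × ℤ)} {a b : ℤ × ℤ} (h : PathIn Adj4 S a b) :
    PathIn Adj8 S a b :=
  h.mono_rel fun _ _ ↦ Adj4.adj8

/-- A pixel set is well-composed if no 2 × 2 block consists of two diagonally opposite pixels of
the set and two diagonally opposite pixels of its complement. -/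
def WellComposed (L : Set (ℤ × ℤ)) : Prop :=
  ∀ m n : ℤ,
    ((m, n) ∈ L → (m + 1, n + 1) ∈ L → (m + 1, n) ∈ L ∨ (m, n + 1) ∈ L) ∧
    ((m + 1, n) ∈ L → (m, n + 1) ∈ L → (m, n) ∈ L ∨ (m + 1, n + 1) ∈ L)

namespace WellComposed

variable {L : Set (ℤ × ℤ)}

theorem compl (hL : WellComposed L) : WellComposed Lᶜ := by
  intro m n
  have := hL m n
  simp only [mem_compl_iff]
  tauto

theorem of_nested_columns
    (h : ∀ m, Prod.mk m ⁻¹' L ⊆ Prod.mk (m + 1) ⁻¹' L ∨ Prod.mk (m + 1) ⁻¹' L ⊆ Prod.mk m ⁻¹' L) :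
    WellComposed L := by
  intro m n
  rcases h m with h | h
  · exact ⟨fun h₁ _ ↦ Or.inl (h h₁), fun _ h₂ ↦ Or.inr (h h₂)⟩
  · exact ⟨fun _ h₂ ↦ Or.inr (h h₂), fun h₁ _ ↦ Or.inl (h h₁)⟩

theorem exists_common_adj4 (hL : WellComposed L) {p q : ℤ × ℤ} (hp : p ∈ L) (hq : q ∈ L)
    (h : Adj8 p q) : p = q ∨ Adj4 p q ∨ ∃ t ∈ L, Adj4 p t ∧ Adj4 t q := by
  obtain ⟨m, n⟩ := p
  obtain ⟨m', n'⟩ := q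
  simp only [Adj8, Adj4, Prod.mk.injEq, Prod.exists] at h ⊢
  by_cases hm : m = m'
  · omega
  by_cases hn : n = n'
  · omega
  suffices (m', n) ∈ L ∨ (m, n') ∈ L by
    refine Or.inr (Or.inr ?_)
    rcases this with h' | h'
    · exact ⟨m', n, h', by omega, by omega⟩
    · exact ⟨m, n', h', by omega, by omega⟩
  rcases (by omega : m' = m + 1 ∨ m = m' + 1) with rfl | rfl <;>
    rcases (by omega : n' = n + 1 ∨ n = n' + 1) with rfl | rfl
  · exact (hL m n).1 hp hq
  · exact ((hL m n').2 hq hp).symm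
  · exact (hL m' n).2 hp hq
  · exact ((hL m' n').1 hq hp).symm

theorem pathIn_adj4 (hL : WellComposed L) {p q : ℤ × ℤ} (hp : p ∈ L) (hq : q ∈ L)
    (h : Adj8 p q) : PathIn Adj4 L p q := by
  obtain rfl | h | ⟨t, ht, hpt, htq⟩ := hL.exists_common_adj4 hp hq h
  · exact PathIn.refl p
  · exact PathIn.single hp hq h
  · exact (PathIn.single hp ht hpt).trans (PathIn.single ht hq htq)

theorem pathIn_adj4_of_adj8 (hL : WellComposed L) {p q : ℤ × ℤ} (h : PathIn Adj8 L p q) :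
    PathIn Adj4 L p q := by
  induction h with
  | refl => exact PathIn.refl p
  | tail _ hst ih => exact ih.trans (hL.pathIn_adj4 hst.1 hst.2.1 hst.2.2)

end WellComposed

end Adjacency

section Ring

/-- The coordinate frame with origin `p` and first axis `u`: for a unit vector `u`, the isometry of
the integer grid taking `0` to `p`, `(1, 0)` to `p + u` and `(0, 1)` to `p` plus the vector `u`
turned by a right angle. Unit vectors `u` are encoded by `Adj4 0 u`. -/
def frame (p u z : ℤ × ℤ) : ℤ × ℤ :=
  (p.1 + z.1 * u.1 - z.2 * u.2, p.2 + z.1 * u.2 + z.2 * u.1)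

theorem eq_of_adj4_zero {u : ℤ × ℤ} (hu : Adj4 0 u) :
    u = (1, 0) ∨ u = (0, 1) ∨ u = (-1, 0) ∨ u = (0, -1) := by
  obtain ⟨x, y⟩ := u
  simp only [Adj4, Prod.fst_zero, Prod.snd_zero, Prod.mk.injEq] at hu ⊢
  omega

variable {p u : ℤ × ℤ}

theorem frame_zero (p u : ℤ × ℤ) : frame p u 0 = p := by simp [frame]

theorem adj4_frame (p : ℤ × ℤ) (hu : Adj4 0 u) {a b : ℤ × ℤ} (h : Adj4 a b) :
    Adj4 (frame p u a) (frame p u b) := by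
  obtain rfl | rfl | rfl | rfl := eq_of_adj4_zero hu <;>
    simp only [Adj4, frame] at h ⊢ <;> omega

theorem adj8_frame (p : ℤ × ℤ) (hu : Adj4 0 u) {a b : ℤ × ℤ} (h : Adj8 a b) :
    Adj8 (frame p u a) (frame p u b) := by
  obtain rfl | rfl | rfl | rfl := eq_of_adj4_zero hu <;>
    simp only [Adj8, frame] at h ⊢ <;> omega

theorem exists_frame_inverse (p : ℤ × ℤ) (hu : Adj4 0 u) :
    ∃ p' u', Adj4 0 u' ∧ (∀ z, frame p' u' (frame p u z) = z) ∧
      ∀ z, frame p u (frame p' u' z) = z := by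
  refine ⟨(-(p.1 * u.1 + p.2 * u.2), p.1 * u.2 - p.2 * u.1), (u.1, -u.2), ?_⟩
  obtain rfl | rfl | rfl | rfl := eq_of_adj4_zero hu <;> simp [Adj4, frame]

theorem frame_injective (p : ℤ × ℤ) (hu : Adj4 0 u) : Function.Injective (frame p u) := by
  obtain ⟨p', u', -, h_left, -⟩ := exists_frame_inverse p hu
  exact Function.LeftInverse.injective h_left

/-- The eight pixels around the origin in cyclic order, starting from a corner and ending with the
edge neighbour `(-1, 0)`. The odd indices are those of the edge neighbours. -/
def ringOffset : ℕ → ℤ × ℤ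
  | 0 => (-1, -1)
  | 1 => (0, -1)
  | 2 => (1, -1)
  | 3 => (1, 0)
  | 4 => (1, 1)
  | 5 => (0, 1)
  | 6 => (-1, 1)
  | _ => (-1, 0)

/-- The `k`-th of the eight pixels around `p` in cyclic order, the last one (`k = 7`) being
`p - u`. -/
def ring (p u : ℤ × ℤ) (k : ℕ) : ℤ × ℤ := frame p u (ringOffset k)

theorem ringOffset_ne_zero (k : ℕ) : ringOffset k ≠ 0 := by
  unfold ringOffset; split <;> simp

theorem adj4_zero_ringOffset {k : ℕ} (hk : k < 8) (hk_odd : k % 2 = 1) :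
    Adj4 0 (ringOffset k) := by
  interval_cases k <;> simp_all [Adj4, ringOffset]

theorem ring_ne (p : ℤ × ℤ) (hu : Adj4 0 u) (k : ℕ) : ring p u k ≠ p := by
  simpa only [frame_zero, ring] using (frame_injective p hu).ne (ringOffset_ne_zero k)

theorem adj8_ring (p : ℤ × ℤ) (hu : Adj4 0 u) (k : ℕ) : Adj8 p (ring p u k) := by
  have h : Adj8 0 (ringOffset k) := by unfold ringOffset; split <;> simp [Adj8]
  simpa only [frame_zero, ring] using adj8_frame p hu h

theorem adj4_ring (p : ℤ × ℤ) (hu : Adj4 0 u) {k : ℕ} (hk : k < 8) (hk_odd : k % 2 = 1) :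
    Adj4 p (ring p u k) := by
  simpa only [frame_zero, ring] using adj4_frame p hu (adj4_zero_ringOffset hk hk_odd)

theorem adj8_ring_succ (p : ℤ × ℤ) (hu : Adj4 0 u) {k : ℕ} (hk : k < 6) :
    Adj8 (ring p u k) (ring p u (k + 1)) :=
  adj8_frame p hu (by interval_cases k <;> simp [Adj8, ringOffset])

theorem adj8_ring_add_two (p : ℤ × ℤ) (hu : Adj4 0 u) {k : ℕ} (hk : k < 6) (hk_odd : k % 2 = 1) :
    Adj8 (ring p u k) (ring p u (k + 2)) :=
  adj8_frame p hu (by interval_cases k <;> simp_all [Adj8, ringOffset])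

theorem exists_ring_eq_of_adj8 (hu : Adj4 0 u) {q : ℤ × ℤ} (h : Adj8 p q) (hq : q ≠ p) :
    ∃ k < 8, ring p u k = q := by
  obtain ⟨p', u', hu', h_left, h_right⟩ := exists_frame_inverse p hu
  have exists_offset (z : ℤ × ℤ) (hz : Adj8 0 z) (hz0 : z ≠ 0) : ∃ k < 8, ringOffset k = z := by
    obtain ⟨x, y⟩ := z
    simp only [Adj8, Prod.fst_zero, Prod.snd_zero] at hz
    obtain ⟨hx, hx', hy, hy'⟩ : -1 ≤ x ∧ x ≤ 1 ∧ -1 ≤ y ∧ y ≤ 1 := by omega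
    interval_cases x <;> interval_cases y <;> first | exact absurd rfl hz0 | decide
  have p'_eq : frame p' u' p = 0 := by simpa only [frame_zero] using h_left 0
  have q'_ne : frame p' u' q ≠ 0 := fun h0 ↦
    hq (frame_injective p' hu' (h0.trans p'_eq.symm))
  obtain ⟨k, hk, hkq⟩ := exists_offset _ (p'_eq ▸ adj8_frame p' hu' h) q'_ne
  exact ⟨k, hk, by rw [ring, hkq, h_right]⟩

theorem exists_ring_seven_eq_of_adj4 {r : ℤ × ℤ} (h : Adj4 p r) :
    ∃ u, Adj4 0 u ∧ ring p u 7 = r := by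
  refine ⟨p - r, ?_, by ext <;> simp [ring, frame, ringOffset]⟩
  simp only [Adj4, Prod.fst_zero, Prod.snd_zero, Prod.fst_sub, Prod.snd_sub] at h ⊢
  omega

end Ring

section Jordan

/-- The indicator of the centre of the pixel `a` lying on the rightward ray from the centre of the
pixel `z`. -/
def ray (a z : ℤ × ℤ) : ZMod 2 := if z.1 < a.1 ∧ a.2 = z.2 then 1 else 0

/-- The intersection number modulo 2 of the edge joining the centres of the 4-adjacent pixels `a`
and `b` with the rightward ray from the corner `c`, where `c` encodes the common corner of the
pixels `c`, `c + (1, 0)`, `c + (0, 1)` and `c + (1, 1)`. -/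
def crossing (a b c : ℤ × ℤ) : ZMod 2 :=
  if a.1 = b.1 ∧ c.1 < a.1 ∧ c.2 = min a.2 b.2 then 1 else 0

/-- The corners of the pixel `0` in cyclic order, encoded as in `crossing`. The corner `k` belongs
to the pixel `ringOffset (2 * k)`, and the corners `k` and `k + 1` to `ringOffset (2 * k + 1)`. -/
def ringCorner : ℕ → ℤ × ℤ
  | 0 => (-1, -1)
  | 1 => (0, -1)
  | 2 => (0, 0)
  | _ => (-1, 0)

/-- `N` behaves like the intersection number modulo 2 of a lattice path from `a` to `b` in `S` with
the rightward rays from the corners. Moving the corner horizontally changes it only across an edge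
of the path; moving it vertically, moreover, when the ray sweeps over an endpoint of the path. -/
structure IsCrossingNumber (S : Set (ℤ × ℤ)) (a b : ℤ × ℤ) (N : ℤ × ℤ → ZMod 2) : Prop where
  left : ∀ x y, ¬((x, y) ∈ S ∧ (x, y + 1) ∈ S) → N (x - 1, y) = N (x, y)
  below : ∀ x y, ¬((x, y) ∈ S ∧ (x + 1, y) ∈ S) →
    N (x, y - 1) = N (x, y) + ray a (x, y) + ray b (x, y)

namespace IsCrossingNumber

variable {S T : Set (ℤ × ℤ)} {a b c : ℤ × ℤ} {N M : ℤ × ℤ → ZMod 2}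

theorem mono (hST : S ⊆ T) (hN : IsCrossingNumber S a b N) : IsCrossingNumber T a b N where
  left x y h := hN.left x y fun h' ↦ h ⟨hST h'.1, hST h'.2⟩
  below x y h := hN.below x y fun h' ↦ h ⟨hST h'.1, hST h'.2⟩

theorem zero (S : Set (ℤ × ℤ)) (a : ℤ × ℤ) : IsCrossingNumber S a a 0 where
  left _ _ _ := rfl
  below x y _ := by simp [CharTwo.add_self_eq_zero]

theorem add (hN : IsCrossingNumber S a b N) (hM : IsCrossingNumber S b c M) :
    IsCrossingNumber S a c (N + M) where
  left x y h := by rw [Pi.add_apply, Pi.add_apply, hN.left x y h, hM.left x y h]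
  below x y h := by
    rw [Pi.add_apply, Pi.add_apply, hN.below x y h, hM.below x y h]
    linear_combination CharTwo.add_self_eq_zero (ray b (x, y))

theorem of_adj4 (ha : a ∈ S) (hb : b ∈ S) (h : Adj4 a b) :
    IsCrossingNumber S a b (crossing a b) where
  left x y hxy := by
    have h_ne : ¬(a = (x, y) ∧ b = (x, y + 1)) ∧ ¬(b = (x, y) ∧ a = (x, y + 1)) :=
      ⟨fun ⟨e, e'⟩ ↦ hxy ⟨e ▸ ha, e' ▸ hb⟩, fun ⟨e, e'⟩ ↦ hxy ⟨e ▸ hb, e' ▸ ha⟩⟩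
    simp only [Prod.ext_iff] at h_ne
    unfold crossing
    congr 1
    simp only [Adj4, eq_iff_iff] at h ⊢
    omega
  below x y hxy := by
    have h_ne : ¬(a = (x, y) ∧ b = (x + 1, y)) ∧ ¬(b = (x, y) ∧ a = (x + 1, y)) :=
      ⟨fun ⟨e, e'⟩ ↦ hxy ⟨e ▸ ha, e' ▸ hb⟩, fun ⟨e, e'⟩ ↦ hxy ⟨e ▸ hb, e' ▸ ha⟩⟩
    simp only [Prod.ext_iff] at h_ne
    simp only [crossing, ray]
    unfold Adj4 at h
    split_ifs <;> first | omega | decide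

theorem exists_of_pathIn (h : PathIn Adj4 S a b) : ∃ N, IsCrossingNumber S a b N := by
  induction h with
  | refl => exact ⟨0, zero S a⟩
  | tail _ hst ih =>
    obtain ⟨N, hN⟩ := ih
    exact ⟨_, hN.add (of_adj4 hst.1 hst.2.1 hst.2.2)⟩

theorem eq_of_corner (hN : IsCrossingNumber S a a N) {q c : ℤ × ℤ} (hq : q ∉ S)
    (h1 : c.1 = q.1 ∨ c.1 = q.1 - 1) (h2 : c.2 = q.2 ∨ c.2 = q.2 - 1) : N c = N q := by
  obtain ⟨x, y⟩ := q
  obtain ⟨x', y'⟩ := c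
  have below (x : ℤ) (h : ¬((x, y) ∈ S ∧ (x + 1, y) ∈ S)) : N (x, y - 1) = N (x, y) := by
    rw [hN.below x y h, add_assoc, CharTwo.add_self_eq_zero, add_zero]
  have left : N (x - 1, y) = N (x, y) := hN.left x y fun h ↦ hq h.1
  simp only at h1 h2
  obtain rfl | rfl := h1 <;> obtain rfl | rfl := h2
  · rfl
  · exact below x' fun h ↦ hq h.1
  · exact left
  · rw [below (x - 1) fun h ↦ hq (by simpa only [sub_add_cancel] using h.2), left]

theorem eq_of_pathIn (hN : IsCrossingNumber S a a N) {q q' : ℤ × ℤ} (h : PathIn Adj8 Sᶜ q q') :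
    N q = N q' := by
  induction h with
  | refl => rfl
  | @tail s t _ hst ih =>
    obtain ⟨hs, ht, h1, h2, h3, h4⟩ := hst
    rw [ih, ← hN.eq_of_corner (c := (min s.1 t.1, min s.2 t.2)) hs (by omega) (by omega),
      ← hN.eq_of_corner (c := (min s.1 t.1, min s.2 t.2)) ht (by omega) (by omega)]

theorem eq_ringCorner (hN : IsCrossingNumber S a a N) {k : ℕ} (hk : k < 7)
    (hkS : ringOffset k ∉ S) : N (ringOffset k) = N (ringCorner (k / 2)) := by
  refine (hN.eq_of_corner hkS ?_ ?_).symm <;>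
    interval_cases k <;> simp [ringCorner, ringOffset]

/-- Closing a path that avoids the pixel `0` through `0`: around `0` the crossing number jumps
exactly at the two edges that were added. -/
theorem close_apply_ringCorner {m : ℕ} (hm : m < 3) (h0 : (0, 0) ∉ S)
    (hN : IsCrossingNumber S (ringOffset 7) (ringOffset (2 * m + 1)) N) {k : ℕ} (hk : k < 4) :
    (crossing 0 (ringOffset 7) + N + crossing (ringOffset (2 * m + 1)) 0) (ringCorner k) =
      (crossing 0 (ringOffset 7) + N + crossing (ringOffset (2 * m + 1)) 0) (ringCorner 0) +
        if m < k then 1 else 0 := by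
  have lower := hN.left 0 (-1) fun h ↦ h0 (by simpa using h.2)
  have upper := hN.left 0 0 fun h ↦ h0 h.1
  have right := hN.below 0 0 fun h ↦ h0 h.1
  interval_cases m <;> interval_cases k <;>
    simp_all [crossing, ray, ringOffset, ringCorner, add_assoc, CharTwo.add_self_eq_zero]

end IsCrossingNumber

/-- A closed curve through the pixel `0` that leaves it across two edges separates the pixels around
`0` on its two sides. -/
theorem not_pathIn_ringOffset {X : Set (ℤ × ℤ)} {i e j : ℕ} (h0 : 0 ∈ X) (hie : i < e)
    (hej : e < j) (hj : j < 7) (he_odd : e % 2 = 1) (hiX : ringOffset i ∈ X)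
    (hjX : ringOffset j ∈ X) (h7 : ringOffset 7 ∉ X) (heX : ringOffset e ∉ X)
    (h : PathIn Adj4 Xᶜ (ringOffset 7) (ringOffset e)) :
    ¬PathIn Adj8 (X \ {0}) (ringOffset i) (ringOffset j) := by
  intro hij
  obtain ⟨m, rfl⟩ : ∃ m, e = 2 * m + 1 := ⟨e / 2, by omega⟩
  obtain ⟨N, hN⟩ := IsCrossingNumber.exists_of_pathIn h
  let S : Set (ℤ × ℤ) := insert 0 Xᶜ
  let M := crossing 0 (ringOffset 7) + N + crossing (ringOffset (2 * m + 1)) 0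
  have hM : IsCrossingNumber S 0 0 M :=
    ((IsCrossingNumber.of_adj4 (mem_insert 0 _) (mem_insert_of_mem 0 h7)
      (adj4_zero_ringOffset (by norm_num) (by norm_num))).add (hN.mono (subset_insert 0 _))).add
    (IsCrossingNumber.of_adj4 (mem_insert_of_mem 0 heX) (mem_insert 0 _)
      (adj4_zero_ringOffset (by omega) he_odd).symm)
  have ring_notMem {k : ℕ} (hk : ringOffset k ∈ X) : ringOffset k ∉ S := fun hkS ↦
    hkS.elim (ringOffset_ne_zero k) fun h' ↦ h' hk
  have hM_corner {k : ℕ} (hk : k < 4) : M (ringCorner k) =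
      M (ringCorner 0) + if m < k then 1 else 0 :=
    hN.close_apply_ringCorner (by omega) (not_not_intro h0) hk
  have hM_eq : M (ringOffset i) = M (ringOffset j) :=
    hM.eq_of_pathIn (hij.mono fun q hq hqS ↦ hqS.elim hq.2 fun h' ↦ h' hq.1)
  rw [hM.eq_ringCorner (by omega) (ring_notMem hiX), hM.eq_ringCorner hj (ring_notMem hjX),
    hM_corner (k := i / 2) (by omega), hM_corner (k := j / 2) (by omega), if_neg (by omega),
    if_pos (by omega), add_right_inj] at hM_eq
  exact zero_ne_one hM_eq

theorem not_pathIn_ring_of_pathIn_compl {X : Set (ℤ × ℤ)} {p u : ℤ × ℤ} (hu : Adj4 0 u)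
    {i e j : ℕ} (hp : p ∈ X) (hie : i < e) (hej : e < j) (hj : j < 7) (he_odd : e % 2 = 1)
    (hiX : ring p u i ∈ X) (hjX : ring p u j ∈ X) (h7 : ring p u 7 ∉ X) (heX : ring p u e ∉ X)
    (h : PathIn Adj4 Xᶜ (ring p u 7) (ring p u e)) :
    ¬PathIn Adj8 (X \ {p}) (ring p u i) (ring p u j) := by
  obtain ⟨p', u', hu', h_left, h_right⟩ := exists_frame_inverse p hu
  have pull {r : ℤ × ℤ → ℤ × ℤ → Prop} (hr : ∀ a b, r a b → r (frame p' u' a) (frame p' u' b))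
      {Y : Set (ℤ × ℤ)} {k l : ℕ} (hkl : PathIn r Y (ring p u k) (ring p u l)) :
      PathIn r (frame p u ⁻¹' Y) (ringOffset k) (ringOffset l) := by
    simpa only [ring, h_left] using hkl.map (f := frame p' u')
      (fun z hz ↦ by simpa only [mem_preimage, h_right] using hz) hr
  intro hij
  refine not_pathIn_ringOffset (X := frame p u ⁻¹' X) (by simpa only [mem_preimage, frame_zero])
    hie hej hj he_odd hiX hjX h7 heX (pull (fun a b hab ↦ adj4_frame p' hu' hab) h)
    ((pull (fun a b hab ↦ adj8_frame p' hu' hab) hij).mono fun z hz ↦ ⟨hz.1, ?_⟩)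
  rintro rfl
  exact hz.2 (frame_zero p u)

end Jordan

section SimplePixels

/-- `p` is a simple pixel of `S` with missing edge neighbour `p - u`: the pixels of `S` around `p`
form a single nonempty arc of the ring, up to missing corner pixels. -/
structure IsSimple (S : Set (ℤ × ℤ)) (p u : ℤ × ℤ) : Prop where
  notMem_seven : ring p u 7 ∉ S
  exists_mem : ∃ k < 7, ring p u k ∈ S
  mem_of_between : ∀ i e j : ℕ, i < e → e < j → j < 7 → e % 2 = 1 → ring p u i ∈ S →
    ring p u j ∈ S → ring p u e ∈ S

namespace IsSimple

variable {S : Set (ℤ × ℤ)} {p u a b : ℤ × ℤ}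

theorem pathIn_ring (hu : Adj4 0 u) (hp : IsSimple S p u) {i j : ℕ} (hij : i < j) (hj : j < 7)
    (hiS : ring p u i ∈ S) (hjS : ring p u j ∈ S) :
    PathIn Adj8 (S \ {p}) (ring p u i) (ring p u j) := by
  have mem {k : ℕ} (hk : ring p u k ∈ S) : ring p u k ∈ S \ {p} := ⟨hk, ring_ne p hu k⟩
  induction hn : j - i using Nat.strong_induction_on generalizing i with
  | _ n ih =>
    obtain ⟨i', hii', hi'j, hi'S, hadj⟩ : ∃ i', i < i' ∧ i' ≤ j ∧ ring p u i' ∈ S ∧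
        Adj8 (ring p u i) (ring p u i') := by
      by_cases hj1 : i + 1 = j
      · exact ⟨j, hij, le_rfl, hjS, hj1 ▸ adj8_ring_succ p hu (by omega)⟩
      by_cases hj2 : i % 2 = 1 ∧ i + 2 = j
      · exact ⟨j, hij, le_rfl, hjS, hj2.2 ▸ adj8_ring_add_two p hu (by omega) hj2.1⟩
      rcases Nat.mod_two_eq_zero_or_one i with hi | hi
      · exact ⟨i + 1, by omega, by omega, hp.mem_of_between i (i + 1) j (by omega) (by omega) hj
          (by omega) hiS hjS, adj8_ring_succ p hu (by omega)⟩
      · exact ⟨i + 2, by omega, by omega, hp.mem_of_between i (i + 2) j (by omega) (by omega) hj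
          (by omega) hiS hjS, adj8_ring_add_two p hu (by omega) hi⟩
    have hstep := PathIn.single (mem hiS) (mem hi'S) hadj
    obtain rfl | hi'j := hi'j.eq_or_lt
    · exact hstep
    · exact hstep.trans (ih (j - i') (by omega) hi'j hi'S rfl)

theorem pathIn_of_adj8 (hu : Adj4 0 u) (hp : IsSimple S p u) (ha : a ∈ S \ {p})
    (hb : b ∈ S \ {p}) (hpa : Adj8 p a) (hpb : Adj8 p b) : PathIn Adj8 (S \ {p}) a b := by
  have exists_index {c : ℤ × ℤ} (hc : c ∈ S \ {p}) (hpc : Adj8 p c) :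
      ∃ k < 7, ring p u k = c := by
    obtain ⟨k, hk, rfl⟩ := exists_ring_eq_of_adj8 hu hpc hc.2
    exact ⟨k, (Nat.lt_succ_iff.1 hk).lt_of_ne fun h ↦ hp.notMem_seven (h ▸ hc.1), rfl⟩
  obtain ⟨i, hi, rfl⟩ := exists_index ha hpa
  obtain ⟨j, hj, rfl⟩ := exists_index hb hpb
  rcases lt_trichotomy i j with h | rfl | h
  · exact hp.pathIn_ring hu h hj ha.1 hb.1
  · exact PathIn.refl _
  · exact (hp.pathIn_ring hu h hi hb.1 ha.1).symm8

theorem pathIn_sdiff (hu : Adj4 0 u) (hp : IsSimple S p u) (ha : a ∈ S \ {p}) (hb : b ≠ p)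
    (h : PathIn Adj8 S a b) : PathIn Adj8 (S \ {p}) a b := by
  have key : (b ≠ p → PathIn Adj8 (S \ {p}) a b) ∧
      (b = p → ∃ c ∈ S \ {p}, Adj8 p c ∧ PathIn Adj8 (S \ {p}) a c) := by
    clear hb
    induction h with
    | refl => exact ⟨fun _ ↦ PathIn.refl a, fun h ↦ (ha.2 h).elim⟩
    | @tail b c _ hbc ih =>
      obtain ⟨hb, hc, hadj⟩ := hbc
      by_cases hbp : b = p
      · subst hbp
        obtain ⟨d, hd, hbd, had⟩ := ih.2 rfl
        exact ⟨fun hcb ↦ had.trans (hp.pathIn_of_adj8 hu hd ⟨hc, hcb⟩ hbd hadj),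
          fun _ ↦ ⟨d, hd, hbd, had⟩⟩
      · refine ⟨fun hcp ↦ (ih.1 hbp).trans (PathIn.single ⟨hb, hbp⟩ ⟨hc, hcp⟩ hadj), ?_⟩
        rintro rfl
        exact ⟨b, ⟨hb, hbp⟩, hadj.symm, ih.1 hbp⟩
  exact key.1 hb

end IsSimple

theorem exists_adj4_notMem_ne {Y : Set (ℤ × ℤ)} (hY : Y.Finite) (hY_nonempty : Y.Nonempty)
    (p : ℤ × ℤ) : ∃ q ∈ Y, ∃ r ∉ Y, r ≠ p ∧ Adj4 q r := by
  obtain ⟨a, ha, ha_min⟩ := Y.exists_min_image Prod.fst hY hY_nonempty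
  obtain ⟨b, hb, hb_max⟩ := Y.exists_max_image Prod.fst hY hY_nonempty
  by_cases hap : (a.1 - 1, a.2) = p
  · refine ⟨b, hb, (b.1 + 1, b.2), fun h ↦ absurd (hb_max _ h) (by simp), ?_, by simp [Adj4]⟩
    have := ha_min b hb
    simp only [← hap, ne_eq, Prod.mk.injEq, not_and]
    omega
  · exact ⟨a, ha, (a.1 - 1, a.2), fun h ↦ absurd (ha_min _ h) (by simp), hap, by simp [Adj4]⟩

/-- The inclusion of `Q` in `X` induces bijections between the foreground components
(8-adjacency) of `Q` and `X` and between the background components (4-adjacency) of `Xᶜ` and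
`Qᶜ`. -/
structure PreservesComponents (Q X : Set (ℤ × ℤ)) : Prop where
  subset : Q ⊆ X
  foreground_surjective : ∀ x ∈ X, ∃ q ∈ Q, PathIn Adj8 X x q
  foreground_injective : ∀ q ∈ Q, ∀ q' ∈ Q, PathIn Adj8 X q q' → PathIn Adj8 Q q q'
  background_injective : ∀ b ∉ X, ∀ b' ∉ X, PathIn Adj4 Qᶜ b b' → PathIn Adj4 Xᶜ b b'
  background_surjective : ∀ x ∉ Q, ∃ b ∉ X, PathIn Adj4 Qᶜ x b

namespace PreservesComponents

variable {Q X : Set (ℤ × ℤ)} {p u : ℤ × ℤ}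

theorem subset_sdiff_singleton (h : PreservesComponents Q X) (hpQ : p ∉ Q) : Q ⊆ X \ {p} :=
  _root_.Set.subset_sdiff_singleton h.subset hpQ

theorem background_injective_sdiff (h : PreservesComponents Q X) (hpQ : p ∉ Q) (hu : Adj4 0 u)
    (hm : ring p u 7 ∉ X) {b b' : ℤ × ℤ} (hb : b ∉ X \ {p}) (hb' : b' ∉ X \ {p})
    (hbb' : PathIn Adj4 Qᶜ b b') : PathIn Adj4 (X \ {p})ᶜ b b' := by
  have hadj : Adj4 p (ring p u 7) := adj4_ring p hu (by norm_num) (by norm_num)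
  have exists_exit {b : ℤ × ℤ} (hb : b ∉ X \ {p}) :
      ∃ c ∉ X, PathIn Adj4 Qᶜ b c ∧ PathIn Adj4 (X \ {p})ᶜ b c := by
    by_cases hbp : b = p
    · subst hbp
      exact ⟨_, hm, PathIn.single hpQ (fun hmQ ↦ hm (h.subset hmQ)) hadj,
        PathIn.single hb (fun hmX ↦ hm hmX.1) hadj⟩
    · exact ⟨b, fun hbX ↦ hb ⟨hbX, hbp⟩, PathIn.refl b, PathIn.refl b⟩
  obtain ⟨c, hc, hbcQ, hbcX⟩ := exists_exit hb
  obtain ⟨c', hc', hbcQ', hbcX'⟩ := exists_exit hb'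
  have hcc' := h.background_injective c hc c' hc' (hbcQ.symm4.trans (hbb'.trans hbcQ'))
  exact hbcX.trans ((hcc'.mono (compl_subset_compl.2 sdiff_subset)).trans hbcX'.symm4)

theorem sdiff_singleton (h : PreservesComponents Q X) (hpQ : p ∉ Q) (hu : Adj4 0 u)
    (hp : IsSimple X p u) : PreservesComponents Q (X \ {p}) where
  subset := h.subset_sdiff_singleton hpQ
  foreground_surjective x hx := by
    obtain ⟨q, hq, hxq⟩ := h.foreground_surjective x hx.1
    exact ⟨q, hq, hp.pathIn_sdiff hu hx (fun hqp ↦ hpQ (hqp ▸ hq)) hxq⟩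
  foreground_injective q hq q' hq' hqq' :=
    h.foreground_injective q hq q' hq' (hqq'.mono sdiff_subset)
  background_injective _ hb _ hb' hbb' :=
    h.background_injective_sdiff hpQ hu hp.notMem_seven hb hb' hbb'
  background_surjective x hx := by
    obtain ⟨b, hb, hxb⟩ := h.background_surjective x hx
    exact ⟨b, fun hbX ↦ hb hbX.1, hxb⟩

theorem exists_ring_mem (h : PreservesComponents Q X) (hp : p ∈ X) (hpQ : p ∉ Q) (hu : Adj4 0 u)
    (hm : ring p u 7 ∉ X) : ∃ k < 7, ring p u k ∈ X := by
  by_contra! hcon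
  have eq_of_pathIn {b : ℤ × ℤ} (hpb : PathIn Adj8 X p b) : b = p := by
    induction hpb with
    | refl => rfl
    | @tail b c _ hbc ih =>
      subst ih
      by_contra hcb
      obtain ⟨k, hk, rfl⟩ := exists_ring_eq_of_adj8 hu hbc.2.2 hcb
      obtain rfl | hk := (Nat.lt_succ_iff.1 hk).eq_or_lt
      exacts [hm hbc.2.1, hcon k hk hbc.2.1]
  obtain ⟨q, hq, hpq⟩ := h.foreground_surjective p hp
  exact hpQ (eq_of_pathIn hpq ▸ hq)

/-- The witnesses are two pixels that the Jordan curve theorem separates: the curve runs from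
`p - u` in the complement of `X` to another missing edge neighbour of `p` and back through `p`. -/
theorem exists_not_pathIn_of_not_isSimple (h : PreservesComponents Q X) (hp : p ∈ X)
    (hpQ : p ∉ Q) (hu : Adj4 0 u) (hm : ring p u 7 ∉ X) (hp_simple : ¬IsSimple X p u) :
    ∃ a ∈ X \ {p}, ∃ b ∈ X \ {p}, Adj8 p a ∧ Adj8 p b ∧ ¬PathIn Adj8 (X \ {p}) a b := by
  obtain ⟨i, e, j, hie, hej, hj, he_odd, hiX, hjX, heX⟩ : ∃ i e j : ℕ, i < e ∧ e < j ∧ j < 7 ∧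
      e % 2 = 1 ∧ ring p u i ∈ X ∧ ring p u j ∈ X ∧ ring p u e ∉ X := by
    by_contra! hcon
    exact hp_simple ⟨hm, h.exists_ring_mem hp hpQ hu hm, hcon⟩
  have notMem_Q {r : ℤ × ℤ} (hr : r ∉ X) : r ∈ Qᶜ := fun hrQ ↦ hr (h.subset hrQ)
  have hQ : PathIn Adj4 Qᶜ (ring p u 7) (ring p u e) :=
    (PathIn.single (notMem_Q hm) hpQ (adj4_ring p hu (by norm_num) (by norm_num)).symm).trans
      (PathIn.single hpQ (notMem_Q heX) (adj4_ring p hu (by omega) he_odd))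
  exact ⟨ring p u i, ⟨hiX, ring_ne p hu i⟩, ring p u j, ⟨hjX, ring_ne p hu j⟩,
    adj8_ring p hu i, adj8_ring p hu j,
    not_pathIn_ring_of_pathIn_compl hu hp hie hej hj he_odd hiX hjX hm heX
      (h.background_injective _ hm _ heX hQ)⟩

/-- A boundary pixel `p'` of the `Q`-free part at `i` is not simple, hence splits off at least two
parts, and one of them avoids `p`. -/
theorem exists_smaller_free_part {i : ℤ × ℤ} (h : PreservesComponents Q X) (hX : X.Finite)
    (hX_simple : ∀ p ∈ X, p ∉ Q → ∀ u, Adj4 0 u → ¬IsSimple X p u) (hi : i ∈ X \ {p})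
    (hfree : ∀ y, PathIn Adj8 (X \ {p}) i y → y ∉ Q) :
    ∃ p', ∃ i' ∈ X \ {p'},
      {y | PathIn Adj8 (X \ {p'}) i' y} ⊂ {y | PathIn Adj8 (X \ {p}) i y} := by
  set Y := {y | PathIn Adj8 (X \ {p}) i y}
  have hYX : Y ⊆ X \ {p} := fun y hy ↦ hy.mem hi
  have mem_Y {y z : ℤ × ℤ} (hy : y ∈ Y) (hz : z ∈ X) (hzp : z ≠ p) (hyz : Adj8 y z) : z ∈ Y :=
    hy.trans (PathIn.single (hYX hy) ⟨hz, hzp⟩ hyz)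
  obtain ⟨p', hp'Y, r, hrY, hrp, hadj⟩ :=
    exists_adj4_notMem_ne (hX.subset (hYX.trans sdiff_subset)) ⟨i, PathIn.refl i⟩ p
  have hrX : r ∉ X := fun hr ↦ hrY (mem_Y hp'Y hr hrp hadj.adj8)
  obtain ⟨u, hu, rfl⟩ := exists_ring_seven_eq_of_adj4 hadj
  have hp'X := (hYX hp'Y).1
  have hp'Q := hfree p' hp'Y
  obtain ⟨c, hc, d, hd, hpc, hpd, hcd⟩ :=
    h.exists_not_pathIn_of_not_isSimple hp'X hp'Q hu hrX (hX_simple p' hp'X hp'Q u hu)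
  obtain ⟨i', hi', hpi', hi'p⟩ :
      ∃ i' ∈ X \ {p'}, Adj8 p' i' ∧ ¬PathIn Adj8 (X \ {p'}) i' p := by
    by_cases hcp : PathIn Adj8 (X \ {p'}) c p
    · exact ⟨d, hd, hpd, fun hdp ↦ hcd (hcp.trans hdp.symm8)⟩
    · exact ⟨c, hc, hpc, hcp⟩
  have subset_Y {y : ℤ × ℤ} (hy : PathIn Adj8 (X \ {p'}) i' y) : y ∈ Y := by
    induction hy with
    | refl => exact mem_Y hp'Y hi'.1 (fun h' ↦ hi'p (h' ▸ PathIn.refl i')) hpi'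
    | tail hys hst ih =>
      exact mem_Y ih hst.2.1.1 (fun h' ↦ hi'p (h' ▸ hys.tail hst)) hst.2.2
  exact ⟨p', i', hi', (Set.ssubset_iff_of_subset fun y ↦ subset_Y).2
    ⟨p', hp'Y, fun hp' ↦ (PathIn.mem hp' hi').2 rfl⟩⟩

theorem exists_mem_pathIn_sdiff {i : ℤ × ℤ} (h : PreservesComponents Q X) (hX : X.Finite)
    (hX_simple : ∀ p ∈ X, p ∉ Q → ∀ u, Adj4 0 u → ¬IsSimple X p u) (hi : i ∈ X \ {p}) :
    ∃ q ∈ Q, PathIn Adj8 (X \ {p}) i q := by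
  induction hn : {y | PathIn Adj8 (X \ {p}) i y}.ncard using Nat.strong_induction_on
    generalizing p i with
  | _ n ih =>
    by_contra! hcon
    obtain ⟨p', i', hi', hss⟩ :=
      h.exists_smaller_free_part hX hX_simple hi fun y hy hyQ ↦ hcon y hyQ hy
    have hfin : {y | PathIn Adj8 (X \ {p}) i y}.Finite :=
      hX.subset fun y hy ↦ (PathIn.mem hy hi).1
    obtain ⟨q, hq, hiq⟩ := ih _ (hn ▸ Set.ncard_lt_ncard hss hfin) hi' rfl
    exact hcon q hq (hss.1 hiq)

theorem exists_isSimple (h : PreservesComponents Q X) (hX : X.Finite) (hXQ : X ≠ Q) :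
    ∃ p ∈ X, p ∉ Q ∧ ∃ u, Adj4 0 u ∧ IsSimple X p u := by
  by_contra! hX_simple
  obtain ⟨x, hx, hxQ⟩ := Set.exists_of_ssubset (h.subset.ssubset_of_ne hXQ.symm)
  obtain ⟨b, hb, hxb⟩ := h.background_surjective x hxQ
  obtain ⟨p, hpQ, hp, r, hr, hadj⟩ := hxb.exists_exit hx hb
  obtain ⟨u, hu, rfl⟩ := exists_ring_seven_eq_of_adj4 hadj
  obtain ⟨c, hc, d, hd, hpc, hpd, hcd⟩ :=
    h.exists_not_pathIn_of_not_isSimple hp hpQ hu hr (hX_simple p hp hpQ u hu)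
  obtain ⟨y, hy, hcy⟩ := h.exists_mem_pathIn_sdiff hX hX_simple hc
  obtain ⟨z, hz, hdz⟩ := h.exists_mem_pathIn_sdiff hX hX_simple hd
  have hcd' : PathIn Adj8 X c d :=
    (PathIn.single hc.1 hp hpc.symm).trans (PathIn.single hp hd.1 hpd)
  have hyz : PathIn Adj8 Q y z := h.foreground_injective y hy z hz
    ((hcy.symm8.mono sdiff_subset).trans (hcd'.trans (hdz.mono sdiff_subset)))
  exact hcd (hcy.trans ((hyz.mono (h.subset_sdiff_singleton hpQ)).trans hdz.symm8))

end PreservesComponents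

end SimplePixels

section Cells

/-- The rectangle in the plane with sides `I` and `J`. -/
def box (I J : Set ℝ) : Set Plane := {z | z 0 ∈ I ∧ z 1 ∈ J}

theorem box_eq_pi (I J : Set ℝ) : box I J = Set.univ.pi ![I, J] := by
  ext z; simp [box, Set.mem_pi, Fin.forall_fin_two]

theorem convex_box {I J : Set ℝ} (hI : Convex ℝ I) (hJ : Convex ℝ J) : Convex ℝ (box I J) := by
  rw [box_eq_pi]
  exact convex_pi fun i _ ↦ by fin_cases i <;> assumption

theorem closure_box (I J : Set ℝ) : closure (box I J) = box (closure I) (closure J) := by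
  simp only [box_eq_pi, closure_pi_set]
  congr 1
  ext i
  fin_cases i <;> rfl

theorem box_mem_nhds {I J : Set ℝ} {z : Plane} (hI : I ∈ nhds (z 0)) (hJ : J ∈ nhds (z 1)) :
    box I J ∈ nhds z := by
  rw [box_eq_pi]
  exact set_pi_mem_nhds finite_univ fun i _ ↦ by fin_cases i <;> assumption

/-- `b` is the bi-infinite increasing sequence of breakpoints of a subdivision of the real line. -/
structure IsSubdivision (b : ℤ → ℝ) : Prop where
  strictMono : StrictMono b
  exists_mem_Ico : ∀ x, ∃ m, x ∈ Ico (b m) (b (m + 1))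

/-- The closed cell with index `q` of the grid in the plane whose lines are at the breakpoints `b`
in both directions. -/
def cell (b : ℤ → ℝ) (q : ℤ × ℤ) : Set Plane :=
  box (Icc (b q.1) (b (q.1 + 1))) (Icc (b q.2) (b (q.2 + 1)))

/-- The interior of `cell b q`. -/
def openCell (b : ℤ → ℝ) (q : ℤ × ℤ) : Set Plane :=
  box (Ioo (b q.1) (b (q.1 + 1))) (Ioo (b q.2) (b (q.2 + 1)))

/-- The union of the closed cells with index in `L`. -/
def cellUnion (b : ℤ → ℝ) (L : Set (ℤ × ℤ)) : Set Plane := ⋃ q ∈ L, cell b q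

variable {b : ℤ → ℝ} {L M : Set (ℤ × ℤ)} {p q : ℤ × ℤ} {z : Plane}

theorem mem_cellUnion : z ∈ cellUnion b L ↔ ∃ q ∈ L, z ∈ cell b q := by
  simp only [cellUnion, mem_iUnion, exists_prop]

theorem cellUnion_mono (h : L ⊆ M) : cellUnion b L ⊆ cellUnion b M :=
  biUnion_subset_biUnion_left h

theorem convex_cell (b : ℤ → ℝ) (q : ℤ × ℤ) : Convex ℝ (cell b q) :=
  convex_box (convex_Icc _ _) (convex_Icc _ _)

theorem openCell_subset_cell (b : ℤ → ℝ) (q : ℤ × ℤ) : openCell b q ⊆ cell b q :=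
  fun _ hz ↦ ⟨Ioo_subset_Icc_self hz.1, Ioo_subset_Icc_self hz.2⟩

namespace IsSubdivision

theorem lt_succ (hb : IsSubdivision b) (m : ℤ) : b m < b (m + 1) :=
  hb.strictMono (lt_add_one m)

theorem of_strictMono (hb : StrictMono b) (h_bot : ∀ x, ∃ m, b m ≤ x) (h_top : ∀ x, ∃ m, x < b m) :
    IsSubdivision b where
  strictMono := hb
  exists_mem_Ico x := by
    obtain ⟨M, hM⟩ := h_top x
    obtain ⟨m, hm, hm_max⟩ := Int.exists_greatest_of_bdd (P := fun m ↦ b m ≤ x)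
      ⟨M, fun m hm ↦ (hb.lt_iff_lt.1 (hm.trans_lt hM)).le⟩ (h_bot x)
    exact ⟨m, hm, not_le.1 fun h ↦ by have := hm_max _ h; omega⟩

theorem intCast : IsSubdivision ((↑) : ℤ → ℝ) :=
  of_strictMono Int.cast_strictMono (fun x ↦ ⟨⌊x⌋, Int.floor_le x⟩) exists_int_gt

theorem exists_mem_cell (hb : IsSubdivision b) (z : Plane) : ∃ q, z ∈ cell b q := by
  obtain ⟨m, hm⟩ := hb.exists_mem_Ico (z 0)
  obtain ⟨n, hn⟩ := hb.exists_mem_Ico (z 1)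
  exact ⟨(m, n), Ico_subset_Icc_self hm, Ico_subset_Icc_self hn⟩

theorem closure_openCell (hb : IsSubdivision b) (q : ℤ × ℤ) :
    closure (openCell b q) = cell b q := by
  rw [openCell, closure_box, closure_Ioo (hb.lt_succ q.1).ne, closure_Ioo (hb.lt_succ q.2).ne,
    cell]

theorem isClosed_cell (hb : IsSubdivision b) (q : ℤ × ℤ) : IsClosed (cell b q) :=
  hb.closure_openCell q ▸ isClosed_closure

theorem adj8_of_mem_cell (hb : IsSubdivision b) (hp : z ∈ cell b p) (hq : z ∈ cell b q) :
    Adj8 p q :=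
  ⟨hb.strictMono.le_iff_le.1 (hp.1.1.trans hq.1.2),
    hb.strictMono.le_iff_le.1 (hq.1.1.trans hp.1.2),
    hb.strictMono.le_iff_le.1 (hp.2.1.trans hq.2.2),
    hb.strictMono.le_iff_le.1 (hq.2.1.trans hp.2.2)⟩

theorem eq_of_mem_Ioo_of_mem_Icc (hb : IsSubdivision b) {m n : ℤ} {x : ℝ}
    (hm : x ∈ Ioo (b m) (b (m + 1))) (hn : x ∈ Icc (b n) (b (n + 1))) : n = m := by
  have h₁ := hb.strictMono.lt_iff_lt.1 (hm.1.trans_le hn.2)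
  have h₂ := hb.strictMono.lt_iff_lt.1 (hn.1.trans_lt hm.2)
  omega

theorem eq_of_mem_openCell_of_mem_cell (hb : IsSubdivision b) (hp : z ∈ openCell b p)
    (hq : z ∈ cell b q) : q = p :=
  Prod.ext (hb.eq_of_mem_Ioo_of_mem_Icc hp.1 hq.1) (hb.eq_of_mem_Ioo_of_mem_Icc hp.2 hq.2)

theorem locallyFinite_Icc (hb : IsSubdivision b) :
    LocallyFinite fun m ↦ Icc (b m) (b (m + 1)) := by
  intro x
  obtain ⟨m, hm, hm'⟩ := hb.exists_mem_Ico x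
  refine ⟨Ioo (b (m - 1)) (b (m + 1)),
    Ioo_mem_nhds ((hb.strictMono (by omega)).trans_le hm) hm',
    (finite_Icc (m - 1) m).subset ?_⟩
  rintro n ⟨y, hyn, hym⟩
  have h₁ := hb.strictMono.lt_iff_lt.1 (hym.1.trans_le hyn.2)
  have h₂ := hb.strictMono.lt_iff_lt.1 (hyn.1.trans_lt hym.2)
  exact ⟨by omega, by omega⟩

theorem locallyFinite_cell (hb : IsSubdivision b) : LocallyFinite (cell b) := by
  intro z
  obtain ⟨s, hs, hs_fin⟩ := hb.locallyFinite_Icc (z 0)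
  obtain ⟨t, ht, ht_fin⟩ := hb.locallyFinite_Icc (z 1)
  refine ⟨box s t, box_mem_nhds hs ht, (hs_fin.prod ht_fin).subset ?_⟩
  rintro q ⟨y, hyq, hys⟩
  exact ⟨⟨y 0, hyq.1, hys.1⟩, ⟨y 1, hyq.2, hys.2⟩⟩

theorem isClosed_cellUnion (hb : IsSubdivision b) (L : Set (ℤ × ℤ)) :
    IsClosed (cellUnion b L) := by
  rw [cellUnion, biUnion_eq_iUnion]
  exact (hb.locallyFinite_cell.comp_injective Subtype.val_injective).isClosed_iUnion
    fun q ↦ hb.isClosed_cell q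

end IsSubdivision

end Cells

section Arc

/-- The unit square with centre `q`, in the coordinates of `frameCoord`. -/
def centredSquare (q : ℤ × ℤ) : Set (ℝ × ℝ) :=
  Icc (q.1 - 1 / 2 : ℝ) (q.1 + 1 / 2) ×ˢ Icc (q.2 - 1 / 2 : ℝ) (q.2 + 1 / 2)

/-- The arc of unit speed that runs through the edges of the square `centredSquare 0` towards
`(0, -1)`, `(1, 0)` and `(0, 1)`, in this order, for parameters between `0` and `3`. -/
def arc (s : ℝ) : ℝ × ℝ := (min (min s (3 - s)) 1 - 1 / 2, max (-1 / 2) (min (1 / 2) (s - 3 / 2)))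

/-- A polynomial that restricts on the image of `arc` to the inverse of `arc`. -/
def arcParam (w : ℝ × ℝ) : ℝ := 3 / 2 + w.2 * (2 - 2 * w.1)

theorem mem_centredSquare {q : ℤ × ℤ} {w : ℝ × ℝ} : w ∈ centredSquare q ↔
    (q.1 - 1 / 2 ≤ w.1 ∧ w.1 ≤ q.1 + 1 / 2) ∧ q.2 - 1 / 2 ≤ w.2 ∧ w.2 ≤ q.2 + 1 / 2 :=
  Iff.rfl

theorem continuous_arc : Continuous arc := by unfold arc; fun_prop

theorem continuous_arcParam : Continuous arcParam := by unfold arcParam; fun_prop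

theorem arc_of_le_one {s : ℝ} (hs : s ≤ 1) : arc s = (s - 1 / 2, -1 / 2) := by
  rw [arc, min_eq_left (by linarith : s ≤ 3 - s), min_eq_left hs, min_eq_right (by linarith),
    max_eq_left (by linarith)]

theorem arc_of_one_le_of_le_two {s : ℝ} (hs : 1 ≤ s) (hs' : s ≤ 2) :
    arc s = (1 / 2, s - 3 / 2) := by
  rw [arc, min_eq_right (le_min hs (by linarith)), min_eq_right (by linarith),
    max_eq_right (by linarith)]
  norm_num

theorem arc_of_two_le {s : ℝ} (hs : 2 ≤ s) : arc s = (5 / 2 - s, 1 / 2) := by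
  rw [arc, min_eq_right (by linarith : 3 - s ≤ s), min_eq_left (by linarith),
    min_eq_left (by linarith), max_eq_right (by linarith)]
  ring_nf

theorem arc_mem_centredSquare_zero {s : ℝ} (hs : s ∈ Icc 0 3) : arc s ∈ centredSquare 0 := by
  obtain ⟨hs₀, hs₃⟩ := hs
  have h : 0 ≤ min (min s (3 - s)) 1 := le_min (le_min hs₀ (by linarith)) zero_le_one
  have h' := min_le_right (min s (3 - s)) 1
  refine ⟨⟨?_, ?_⟩, ?_, ?_⟩ <;> simp only [arc, Prod.fst_zero, Prod.snd_zero, Int.cast_zero]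
  · linarith
  · linarith
  · exact le_max_of_le_left (by norm_num)
  · exact max_le (by norm_num) ((min_le_left _ _).trans (by norm_num))

theorem arc_mem_centredSquare_ringOffset {k : ℕ} (hk : k < 7) {s : ℝ}
    (hs : s ∈ Icc ((k / 2 : ℕ) : ℝ) ((k + 1) / 2 : ℕ)) :
    arc s ∈ centredSquare (ringOffset k) := by
  obtain ⟨hs, hs'⟩ := hs
  rcases (by omega : (k + 1) / 2 ≤ 1 ∨ 1 ≤ k / 2 ∧ (k + 1) / 2 ≤ 2 ∨ 2 ≤ k / 2) with h | h | h
  · rw [arc_of_le_one (hs'.trans (by exact_mod_cast h))]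
    interval_cases k <;> norm_num [mem_centredSquare, ringOffset] at * <;> grind
  · rw [arc_of_one_le_of_le_two (le_trans (by exact_mod_cast h.1) hs)
      (hs'.trans (by exact_mod_cast h.2))]
    interval_cases k <;> norm_num [mem_centredSquare, ringOffset] at * <;> grind
  · rw [arc_of_two_le (le_trans (by exact_mod_cast h) hs)]
    interval_cases k <;> norm_num [mem_centredSquare, ringOffset] at * <;> grind

theorem mem_edge_of_mem_centredSquare {k : ℕ} (hk : k < 7) {w : ℝ × ℝ}
    (hw₀ : w ∈ centredSquare 0) (hw : w ∈ centredSquare (ringOffset k)) :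
    w.2 = -1 / 2 ∨ w.1 = 1 / 2 ∨ w.2 = 1 / 2 := by
  simp only [mem_centredSquare, Prod.fst_zero, Prod.snd_zero, Int.cast_zero] at hw₀
  interval_cases k <;> norm_num [mem_centredSquare, ringOffset] at hw <;> grind

theorem arc_arcParam {k : ℕ} (hk : k < 7) {w : ℝ × ℝ} (hw₀ : w ∈ centredSquare 0)
    (hw : w ∈ centredSquare (ringOffset k)) : arc (arcParam w) = w := by
  have h_edge := mem_edge_of_mem_centredSquare hk hw₀ hw
  obtain ⟨x, y⟩ := w
  simp only [mem_centredSquare, Prod.fst_zero, Prod.snd_zero, Int.cast_zero] at hw₀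
  obtain rfl | rfl | rfl := h_edge
  · have hs : arcParam (x, -1 / 2) = x + 1 / 2 := by unfold arcParam; ring
    rw [hs, arc_of_le_one (by linarith), add_sub_cancel_right]
  · have hs : arcParam (1 / 2, y) = y + 3 / 2 := by unfold arcParam; ring
    rw [hs, arc_of_one_le_of_le_two (by linarith) (by linarith), add_sub_cancel_right]
  · have hs : arcParam (x, 1 / 2) = 5 / 2 - x := by unfold arcParam; ring
    rw [hs, arc_of_two_le (by linarith), sub_sub_cancel]

theorem arcParam_mem_Icc {k : ℕ} (hk : k < 7) {w : ℝ × ℝ} (hw₀ : w ∈ centredSquare 0)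
    (hw : w ∈ centredSquare (ringOffset k)) :
    arcParam w ∈ Icc ((k / 2 : ℕ) : ℝ) ((k + 1) / 2 : ℕ) := by
  have h_edge := mem_edge_of_mem_centredSquare hk hw₀ hw
  obtain ⟨x, y⟩ := w
  simp only [mem_centredSquare, Prod.fst_zero, Prod.snd_zero, Int.cast_zero] at hw₀
  obtain rfl | rfl | rfl := h_edge <;> interval_cases k <;>
    simp only [mem_centredSquare, ringOffset, arcParam, mem_Icc, Nat.reduceDiv, Nat.reduceAdd]
      at hw ⊢ <;>
    push_cast at hw ⊢ <;> constructor <;> linarith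

end Arc

section Removal

/-- The coordinates of a point of the plane in the frame with origin the centre of the pixel `p` and
first axis `u`: the counterpart in the plane of the inverse of `frame p u`. -/
def frameCoord (p u : ℤ × ℤ) (z : Plane) : ℝ × ℝ :=
  (u.1 * (z 0 - (p.1 + 1 / 2)) + u.2 * (z 1 - (p.2 + 1 / 2)),
    u.1 * (z 1 - (p.2 + 1 / 2)) - u.2 * (z 0 - (p.1 + 1 / 2)))

/-- The point of the plane with given `frameCoord`. -/
def framePoint (p u : ℤ × ℤ) (w : ℝ × ℝ) : Plane :=
  ![p.1 + 1 / 2 + w.1 * u.1 - w.2 * u.2, p.2 + 1 / 2 + w.1 * u.2 + w.2 * u.1]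

theorem continuous_frameCoord (p u : ℤ × ℤ) : Continuous (frameCoord p u) := by
  unfold frameCoord; fun_prop

theorem continuous_framePoint (p u : ℤ × ℤ) : Continuous (framePoint p u) := by
  unfold framePoint; fun_prop

theorem frameCoord_framePoint (p : ℤ × ℤ) {u : ℤ × ℤ} (hu : Adj4 0 u) (w : ℝ × ℝ) :
    frameCoord p u (framePoint p u w) = w := by
  obtain rfl | rfl | rfl | rfl := eq_of_adj4_zero hu <;> simp [frameCoord, framePoint]

theorem framePoint_frameCoord (p : ℤ × ℤ) {u : ℤ × ℤ} (hu : Adj4 0 u) (z : Plane) :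
    framePoint p u (frameCoord p u z) = z := by
  ext i
  obtain rfl | rfl | rfl | rfl := eq_of_adj4_zero hu <;> fin_cases i <;>
    simp [frameCoord, framePoint]

theorem mem_cell_frame (p : ℤ × ℤ) {u : ℤ × ℤ} (hu : Adj4 0 u) {q : ℤ × ℤ} {z : Plane} :
    z ∈ cell (↑) (frame p u q) ↔ frameCoord p u z ∈ centredSquare q := by
  obtain rfl | rfl | rfl | rfl := eq_of_adj4_zero hu <;>
    simp only [cell, box, frame, frameCoord, mem_centredSquare, mem_ofPred_eq, mem_Icc] <;>
    push_cast <;> constructor <;> rintro ⟨⟨h₁, h₂⟩, h₃, h₄⟩ <;>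
    refine ⟨⟨?_, ?_⟩, ?_, ?_⟩ <;> linarith

variable {S Q X : Set (ℤ × ℤ)} {p u : ℤ × ℤ}

theorem framePoint_mem_cell_frame (p : ℤ × ℤ) (hu : Adj4 0 u) {q : ℤ × ℤ} {w : ℝ × ℝ} :
    framePoint p u w ∈ cell (↑) (frame p u q) ↔ w ∈ centredSquare q := by
  rw [mem_cell_frame p hu, frameCoord_framePoint p hu]

theorem exists_nat_mem_Icc_succ {a b : ℕ} (hab : a < b) {s : ℝ} (hs : s ∈ Icc (a : ℝ) b) :
    ∃ l, a ≤ l ∧ l < b ∧ s ∈ Icc (l : ℝ) (l + 1 : ℕ) := by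
  obtain h | h := hs.2.lt_or_eq
  · have hs₀ : 0 ≤ s := a.cast_nonneg.trans hs.1
    exact ⟨⌊s⌋₊, Nat.le_floor hs.1, (Nat.floor_lt hs₀).2 h, Nat.floor_le hs₀,
      by exact_mod_cast (Nat.lt_floor_add_one s).le⟩
  · refine ⟨b - 1, by omega, by omega, ?_⟩
    rw [h, mem_Icc, Nat.cast_le, Nat.cast_le]
    omega

/-- The part of the boundary of `p` covered by its neighbours in `S`, in the parametrization by
`arc`, is a nonempty interval. -/
theorem IsSimple.exists_interval (h : IsSimple S p u) :
    ∃ a b : ℕ, a ≤ b ∧ b ≤ 3 ∧ (∀ k < 7, ring p u k ∈ S → a ≤ k / 2 ∧ (k + 1) / 2 ≤ b) ∧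
      ∀ s ∈ Icc (a : ℝ) b,
        ∃ k < 7, ring p u k ∈ S ∧ s ∈ Icc ((k / 2 : ℕ) : ℝ) ((k + 1) / 2 : ℕ) := by
  have h_fin : {k | k < 7 ∧ ring p u k ∈ S}.Finite := (finite_lt_nat 7).subset fun k hk ↦ hk.1
  obtain ⟨i, ⟨hi, hiS⟩, i_min⟩ := exists_min_image _ id h_fin h.exists_mem
  obtain ⟨j, ⟨hj, hjS⟩, j_max⟩ := exists_max_image _ id h_fin h.exists_mem
  have hij : i ≤ j := i_min j ⟨hj, hjS⟩
  refine ⟨i / 2, (j + 1) / 2, by omega, by omega, fun k hk hkS ↦ ?_, fun s hs ↦ ?_⟩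
  · have hik : i ≤ k := i_min k ⟨hk, hkS⟩
    have hkj : k ≤ j := j_max k ⟨hk, hkS⟩
    omega
  obtain h_eq | h_lt : i / 2 = (j + 1) / 2 ∨ i / 2 < (j + 1) / 2 := by omega
  · refine ⟨i, hi, hiS, hs.1, hs.2.trans ?_⟩
    exact_mod_cast (by omega : (j + 1) / 2 ≤ (i + 1) / 2)
  · obtain ⟨l, hil, hlj, hl⟩ := exists_nat_mem_Icc_succ h_lt hs
    refine ⟨2 * l + 1, by omega, ?_, ?_⟩
    · obtain rfl | hi_lt : i = 2 * l + 1 ∨ i < 2 * l + 1 := by omega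
      · exact hiS
      obtain rfl | hj_gt : j = 2 * l + 1 ∨ 2 * l + 1 < j := by omega
      · exact hjS
      exact h.mem_of_between i (2 * l + 1) j hi_lt hj_gt hj (by omega) hiS hjS
    · rwa [(by omega : (2 * l + 1) / 2 = l), (by omega : (2 * l + 1 + 1) / 2 = l + 1)]

theorem IsSimple.exists_ring_of_mem_cell (h : IsSimple S p u) (hu : Adj4 0 u) {z : Plane}
    (hz : z ∈ cell (↑) p ∩ cellUnion (↑) (S \ {p})) :
    ∃ k < 7, ring p u k ∈ S ∧ z ∈ cell (↑) (ring p u k) := by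
  obtain ⟨q, hq, hzq⟩ := mem_cellUnion.1 hz.2
  obtain ⟨k, hk, rfl⟩ :=
    exists_ring_eq_of_adj8 hu (IsSubdivision.intCast.adj8_of_mem_cell hz.1 hzq) hq.2
  refine ⟨k, lt_of_le_of_ne (Nat.le_of_lt_succ hk) ?_, hq.1, hzq⟩
  rintro rfl
  exact h.notMem_seven hq.1

/-- The square `p` is convex and retracts onto the covered part of its boundary: take the parameter
of a point, project it to the interval of covered parameters, and return along the arc. -/
theorem IsSimple.homotopyEquiv_sdiff_singleton (h : IsSimple S p u) (hu : Adj4 0 u) (hp : p ∈ S) :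
    Nonempty (ContinuousMap.HomotopyEquiv
      ↥(cellUnion (↑) S) ↥(cellUnion (↑) (S \ {p}))) := by
  obtain ⟨a, b, hab, hb, h_ring, h_arc⟩ := h.exists_interval
  have hab' : (a : ℝ) ≤ b := by exact_mod_cast hab
  let r : Plane → Plane := fun z ↦
    framePoint p u (arc (projIcc (a : ℝ) b hab' (arcParam (frameCoord p u z))))
  have r_cont : Continuous r := (continuous_framePoint p u).comp <| continuous_arc.comp <|
    continuous_subtype_val.comp <| continuous_projIcc.comp <|
    continuous_arcParam.comp (continuous_frameCoord p u)
  have r_mem : MapsTo r (cell (↑) p) (cell (↑) p ∩ cellUnion (↑) (S \ {p})) := by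
    rintro z -
    have hs_ab := (projIcc (a : ℝ) b hab' (arcParam (frameCoord p u z))).2
    have hs : _ ∈ Icc (0 : ℝ) 3 := Icc_subset_Icc a.cast_nonneg (by exact_mod_cast hb) hs_ab
    obtain ⟨k, hk, hkS, hks⟩ := h_arc _ hs_ab
    have hz_zero := (framePoint_mem_cell_frame p hu).2 (arc_mem_centredSquare_zero hs)
    have hz_ring := (framePoint_mem_cell_frame p hu).2 (arc_mem_centredSquare_ringOffset hk hks)
    rw [frame_zero] at hz_zero
    exact ⟨hz_zero, mem_cellUnion.2 ⟨ring p u k, ⟨hkS, ring_ne p hu k⟩, hz_ring⟩⟩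
  have r_fix : ∀ z ∈ cell (↑) p ∩ cellUnion (↑) (S \ {p}), r z = z := by
    intro z hz
    obtain ⟨k, hk, hkS, hzk⟩ := h.exists_ring_of_mem_cell hu hz
    have hz₀ : frameCoord p u z ∈ centredSquare 0 := by
      rw [← mem_cell_frame p hu, frame_zero]
      exact hz.1
    have hz' : frameCoord p u z ∈ centredSquare (ringOffset k) := (mem_cell_frame p hu).1 hzk
    have hs : arcParam (frameCoord p u z) ∈ Icc (a : ℝ) b :=
      Icc_subset_Icc (by exact_mod_cast (h_ring k hk hkS).1)
        (by exact_mod_cast (h_ring k hk hkS).2) (arcParam_mem_Icc hk hz₀ hz')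
    simp only [r, projIcc_of_mem hab' hs, arc_arcParam hk hz₀ hz', framePoint_frameCoord p hu]
  have h_union : cellUnion (↑) S = cell (↑) p ∪ cellUnion (↑) (S \ {p}) := by
    simp only [cellUnion, ← biUnion_insert, insert_sdiff_singleton, insert_eq_of_mem hp]
  rw [h_union]
  exact homotopyEquiv_union_of_convex_retraction (convex_cell _ p)
    (IsSubdivision.intCast.isClosed_cell p) (IsSubdivision.intCast.isClosed_cellUnion _)
    r_cont.continuousOn r_mem r_fix

theorem PreservesComponents.homotopyEquiv (h : PreservesComponents Q X) (hX : X.Finite) :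
    Nonempty (ContinuousMap.HomotopyEquiv ↥(cellUnion (↑) X) ↥(cellUnion (↑) Q)) := by
  induction hn : X.ncard using Nat.strong_induction_on generalizing X with
  | _ n ih =>
    obtain rfl | hXQ := eq_or_ne X Q
    · exact ⟨.refl _⟩
    obtain ⟨p, hp, hpQ, u, hu, hs⟩ := h.exists_isSimple hX hXQ
    obtain ⟨e⟩ := hs.homotopyEquiv_sdiff_singleton hu hp
    obtain ⟨e'⟩ := ih _ (hn ▸ ncard_sdiff_singleton_lt_of_mem hp hX)
      (h.sdiff_singleton hpQ hu hs) hX.sdiff rfl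
    exact ⟨e.trans e'⟩

end Removal

section Regions

/-- The centre of `cell b q`. -/
def centre (b : ℤ → ℝ) (q : ℤ × ℤ) : Plane :=
  ![(b q.1 + b (q.1 + 1)) / 2, (b q.2 + b (q.2 + 1)) / 2]

/-- `R` consists of the interior of the union of the cells with index in `L` and of some points of
the boundary of this union. -/
structure IsRegion (b : ℤ → ℝ) (L : Set (ℤ × ℤ)) (R : Set Plane) : Prop where
  mem_of_forall_cell : ∀ z, (∀ q, z ∈ cell b q → q ∈ L) → z ∈ R
  subset_cellUnion : R ⊆ cellUnion b L

/-- The connected component of `R` that contains the centre of `cell b q`. -/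
def componentAt (b : ℤ → ℝ) (R : Set Plane) (q : ℤ × ℤ) : Set Plane :=
  connectedComponentIn R (centre b q)

variable {b : ℤ → ℝ} {L M D : Set (ℤ × ℤ)} {R R' S T : Set Plane} {p q : ℤ × ℤ}

theorem IsSubdivision.centre_mem_openCell (hb : IsSubdivision b) (q : ℤ × ℤ) :
    centre b q ∈ openCell b q := by
  have h₁ := hb.lt_succ q.1
  have h₂ := hb.lt_succ q.2
  refine ⟨⟨?_, ?_⟩, ?_, ?_⟩ <;> simp [centre] <;> linarith

theorem IsSubdivision.centre_mem_cell (hb : IsSubdivision b) (q : ℤ × ℤ) :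
    centre b q ∈ cell b q :=
  openCell_subset_cell b q (hb.centre_mem_openCell q)

theorem IsSubdivision.infinite_cell_inter_cell (hb : IsSubdivision b) (h : Adj4 p q) :
    (cell b p ∩ cell b q).Infinite := by
  have b_mono := hb.strictMono.monotone
  have mem_Icc_max {m n : ℤ} (h : n = m + 1 ∨ m = n + 1) :
      b (max m n) ∈ Icc (b m) (b (m + 1)) ∩ Icc (b n) (b (n + 1)) :=
    ⟨⟨b_mono (by omega), b_mono (by omega)⟩, b_mono (by omega), b_mono (by omega)⟩
  obtain ⟨h₁, h₂⟩ | ⟨h₂, h₁⟩ := h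
  · refine ((Icc_infinite (hb.lt_succ p.1)).image (f := fun x ↦ (![x, b (max p.2 q.2)] : Plane))
      fun x _ y _ hxy ↦ congrFun hxy 0).mono ?_
    rintro _ ⟨x, hx, rfl⟩
    exact ⟨⟨hx, (mem_Icc_max h₂).1⟩, h₁ ▸ hx, (mem_Icc_max h₂).2⟩
  · refine ((Icc_infinite (hb.lt_succ p.2)).image (f := fun y ↦ (![b (max p.1 q.1), y] : Plane))
      fun x _ y _ hxy ↦ congrFun hxy 1).mono ?_
    rintro _ ⟨y, hy, rfl⟩
    exact ⟨⟨(mem_Icc_max h₁).1, hy⟩, (mem_Icc_max h₁).2, h₂ ▸ hy⟩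

theorem IsSubdivision.pathIn_of_isPreconnected (hb : IsSubdivision b) (hL : WellComposed L)
    (hS : IsPreconnected S) (hSL : S ⊆ cellUnion b L) (hp : p ∈ L) (hq : q ∈ L)
    (hpS : (S ∩ cell b p).Nonempty) (hqS : (S ∩ cell b q).Nonempty) : PathIn Adj4 L p q := by
  by_contra hpq
  let L₁ : Set (ℤ × ℤ) := {r ∈ L | PathIn Adj4 L p r}
  let L₂ : Set (ℤ × ℤ) := {r ∈ L | ¬PathIn Adj4 L p r}
  have h_cover : S ⊆ cellUnion b L₁ ∪ cellUnion b L₂ := by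
    intro w hw
    obtain ⟨r, hr, hwr⟩ := mem_cellUnion.1 (hSL hw)
    by_cases h : PathIn Adj4 L p r
    · exact Or.inl (mem_cellUnion.2 ⟨r, ⟨hr, h⟩, hwr⟩)
    · exact Or.inr (mem_cellUnion.2 ⟨r, ⟨hr, h⟩, hwr⟩)
  have h₁ : (S ∩ cellUnion b L₁).Nonempty := hpS.mono <|
    inter_subset_inter_right S (subset_biUnion_of_mem (u := cell b) ⟨hp, PathIn.refl p⟩)
  have h₂ : (S ∩ cellUnion b L₂).Nonempty := hqS.mono <|
    inter_subset_inter_right S (subset_biUnion_of_mem (u := cell b) ⟨hq, hpq⟩)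
  obtain ⟨w, -, hw₁, hw₂⟩ := isPreconnected_closed_iff.1 hS _ _ (hb.isClosed_cellUnion L₁)
    (hb.isClosed_cellUnion L₂) h_cover h₁ h₂
  obtain ⟨r, ⟨hr, hpr⟩, hwr⟩ := mem_cellUnion.1 hw₁
  obtain ⟨s, ⟨hs, hps⟩, hws⟩ := mem_cellUnion.1 hw₂
  exact hps (hpr.trans (hL.pathIn_adj4 hr hs (hb.adj8_of_mem_cell hwr hws)))

theorem IsSubdivision.pathIn_of_sharesEdge (hb : IsSubdivision b) (hD : WellComposed D)
    (hS : IsPreconnected S) (hT : IsPreconnected T) (hSD : S ⊆ cellUnion b D)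
    (hTD : T ⊆ cellUnion b D) (h : SharesEdge T S) (hp : p ∈ D) (hq : q ∈ D)
    (hpS : (S ∩ cell b p).Nonempty) (hqT : (T ∩ cell b q).Nonempty) : PathIn Adj4 D p q := by
  obtain ⟨w, hwT, hwS⟩ := h.nonempty
  have hD_closed := hb.isClosed_cellUnion D
  refine hb.pathIn_of_isPreconnected hD (hS.closure.union w hwS hwT hT.closure)
    (union_subset (closure_minimal hSD hD_closed) (closure_minimal hTD hD_closed)) hp hq
    (hpS.mono ?_) (hqT.mono ?_)
  · exact inter_subset_inter_left _ (subset_closure.trans subset_union_left)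
  · exact inter_subset_inter_left _ (subset_closure.trans subset_union_right)

namespace IsRegion

theorem openCell_subset (hR : IsRegion b L R) (hb : IsSubdivision b) (hp : p ∈ L) :
    openCell b p ⊆ R := fun z hz ↦
  hR.mem_of_forall_cell z fun _ hq ↦ hb.eq_of_mem_openCell_of_mem_cell hz hq ▸ hp

theorem centre_mem (hR : IsRegion b L R) (hb : IsSubdivision b) (hp : p ∈ L) :
    centre b p ∈ R :=
  hR.openCell_subset hb hp (hb.centre_mem_openCell p)

theorem isCompOf_componentAt (hR : IsRegion b L R) (hb : IsSubdivision b) (hp : p ∈ L) :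
    IsCompOf (componentAt b R p) R :=
  ⟨centre b p, hR.centre_mem hb hp, rfl⟩

theorem centre_mem_componentAt (hR : IsRegion b L R) (hb : IsSubdivision b) (hp : p ∈ L) :
    centre b p ∈ componentAt b R p :=
  mem_connectedComponentIn (hR.centre_mem hb hp)

theorem subset_cellUnion_of_isCompOf (hR : IsRegion b L R) (hT : IsCompOf T R) :
    T ⊆ cellUnion b L := by
  obtain ⟨z, -, rfl⟩ := hT
  exact (connectedComponentIn_subset R z).trans hR.subset_cellUnion

theorem cell_subset_closure_componentAt (hR : IsRegion b L R) (hb : IsSubdivision b) (hp : p ∈ L) :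
    cell b p ⊆ closure (componentAt b R p) := by
  rw [← hb.closure_openCell p]
  exact closure_mono <| (convex_box (convex_Ioo _ _) (convex_Ioo _ _)).isPreconnected
    |>.subset_connectedComponentIn (hb.centre_mem_openCell p) (hR.openCell_subset hb hp)

theorem componentAt_eq_of_adj4 (hR : IsRegion b L R) (hb : IsSubdivision b) (hp : p ∈ L)
    (hq : q ∈ L) (h : Adj4 p q) : componentAt b R p = componentAt b R q := by
  have b_mono := hb.strictMono.monotone
  let O := box (Ioo (b (min p.1 q.1)) (b (max p.1 q.1 + 1)))
    (Ioo (b (min p.2 q.2)) (b (max p.2 q.2 + 1)))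
  have hO : IsPreconnected O := (convex_box (convex_Ioo _ _) (convex_Ioo _ _)).isPreconnected
  have hpO : centre b p ∈ O := by
    obtain ⟨h₁, h₂⟩ := hb.centre_mem_openCell p
    exact ⟨Ioo_subset_Ioo (b_mono (by omega)) (b_mono (by omega)) h₁,
      Ioo_subset_Ioo (b_mono (by omega)) (b_mono (by omega)) h₂⟩
  have hqO : centre b q ∈ O := by
    obtain ⟨h₁, h₂⟩ := hb.centre_mem_openCell q
    exact ⟨Ioo_subset_Ioo (b_mono (by omega)) (b_mono (by omega)) h₁,
      Ioo_subset_Ioo (b_mono (by omega)) (b_mono (by omega)) h₂⟩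
  have hOR : O ⊆ R := by
    rintro z ⟨hz₁, hz₂⟩
    refine hR.mem_of_forall_cell z fun r hr ↦ ?_
    have h₁ := hb.strictMono.lt_iff_lt.1 (hz₁.1.trans_le hr.1.2)
    have h₂ := hb.strictMono.lt_iff_lt.1 (hr.1.1.trans_lt hz₁.2)
    have h₃ := hb.strictMono.lt_iff_lt.1 (hz₂.1.trans_le hr.2.2)
    have h₄ := hb.strictMono.lt_iff_lt.1 (hr.2.1.trans_lt hz₂.2)
    obtain rfl | rfl : r = p ∨ r = q := by
      simp only [Adj4, Prod.ext_iff] at h ⊢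
      omega
    exacts [hp, hq]
  exact connectedComponentIn_eq (hO.subset_connectedComponentIn hpO hOR hqO)

theorem componentAt_eq_of_pathIn (hR : IsRegion b L R) (hb : IsSubdivision b)
    (h : PathIn Adj4 L p q) : componentAt b R p = componentAt b R q := by
  induction h with
  | refl => rfl
  | tail _ hst ih => exact ih.trans (hR.componentAt_eq_of_adj4 hb hst.1 hst.2.1 hst.2.2)

theorem sharesEdge_of_adj4 (hR : IsRegion b L R) (hR' : IsRegion b M R') (hb : IsSubdivision b)
    (hp : p ∈ L) (hq : q ∈ M) (h : Adj4 p q) :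
    SharesEdge (componentAt b R p) (componentAt b R' q) :=
  (hb.infinite_cell_inter_cell h).mono <| inter_subset_inter
    (hR.cell_subset_closure_componentAt hb hp) (hR'.cell_subset_closure_componentAt hb hq)

theorem exists_pathIn_of_sharesEdge (hR : IsRegion b L R) (hR' : IsRegion b M R')
    (hb : IsSubdivision b) (hD : WellComposed D) (hLD : L ⊆ D) (hMD : M ⊆ D) (hp : p ∈ L)
    (h : ∃ T, IsCompOf T R' ∧ SharesEdge T (componentAt b R p)) :
    ∃ q ∈ M, PathIn Adj4 D p q := by
  obtain ⟨T, hT, hTp⟩ := h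
  have hTM := hR'.subset_cellUnion_of_isCompOf hT
  have hpL := hR.subset_cellUnion_of_isCompOf (hR.isCompOf_componentAt hb hp)
  obtain ⟨z, hz, rfl⟩ := hT
  have hzT := mem_connectedComponentIn hz
  obtain ⟨q, hq, hzq⟩ := mem_cellUnion.1 (hTM hzT)
  exact ⟨q, hq, hb.pathIn_of_sharesEdge hD isPreconnected_connectedComponentIn
    isPreconnected_connectedComponentIn (hpL.trans (cellUnion_mono hLD))
    (hTM.trans (cellUnion_mono hMD)) hTp (hLD hp) (hMD hq)
    ⟨_, hR.centre_mem_componentAt hb hp, hb.centre_mem_cell p⟩ ⟨z, hzT, hzq⟩⟩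

theorem pathIn_of_existsUnique_sharesEdge (hR : IsRegion b L R) (hR' : IsRegion b M R')
    (hb : IsSubdivision b) (hM : WellComposed M) {p' q' : ℤ × ℤ}
    (h : ∃! T, IsCompOf T R' ∧ SharesEdge T (componentAt b R p)) (hp : p ∈ L) (hp' : p' ∈ L)
    (hpp' : PathIn Adj4 L p p') (hq : q ∈ M) (hq' : q' ∈ M) (hqp : Adj4 q p)
    (hqp' : Adj4 q' p') : PathIn Adj4 M q q' := by
  have h_edge' : SharesEdge (componentAt b R' q') (componentAt b R p) := by
    rw [hR.componentAt_eq_of_pathIn hb hpp']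
    exact hR'.sharesEdge_of_adj4 hR hb hq' hp' hqp'
  have h_eq : componentAt b R' q = componentAt b R' q' := h.unique
    ⟨hR'.isCompOf_componentAt hb hq, hR'.sharesEdge_of_adj4 hR hb hq hp hqp⟩
    ⟨hR'.isCompOf_componentAt hb hq', h_edge'⟩
  have h_mem : centre b q' ∈ componentAt b R' q := by
    rw [h_eq]
    exact hR'.centre_mem_componentAt hb hq'
  exact hb.pathIn_of_isPreconnected hM isPreconnected_connectedComponentIn
    (hR'.subset_cellUnion_of_isCompOf (hR'.isCompOf_componentAt hb hq)) hq hq'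
    ⟨_, hR'.centre_mem_componentAt hb hq, hb.centre_mem_cell q⟩
    ⟨_, h_mem, hb.centre_mem_cell q'⟩

end IsRegion

end Regions

section GeneralPosition

/-- Passing from the pair of sets `(s, t)` to the pair `(s', t')`, at most one of the two sets
changes, and that set only grows or only shrinks. -/
def SimpleTransition {α : Type*} (s t s' t' : Set α) : Prop :=
  (t = t' ∧ (s ⊆ s' ∨ s' ⊆ s)) ∨ (s = s' ∧ (t ⊆ t' ∨ t' ⊆ t))

namespace SimpleTransition

variable {α : Type*} {s t s' t' : Set α}

theorem swap (h : SimpleTransition s t s' t') : SimpleTransition t s t' s' := Or.symm h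

theorem eq_or_eq (h : SimpleTransition s t s' t') : s = s' ∨ t = t' :=
  h.symm.imp And.left And.left

theorem nested_left (h : SimpleTransition s t s' t') : s ⊆ s' ∨ s' ⊆ s :=
  h.elim And.right fun h ↦ Or.inl h.1.subset

theorem nested_inter (h : SimpleTransition s t s' t') : s ∩ t ⊆ s' ∩ t' ∨ s' ∩ t' ⊆ s ∩ t := by
  obtain ⟨rfl, h⟩ | ⟨rfl, h⟩ := h
  · exact h.imp (inter_subset_inter_left t) (inter_subset_inter_left t)
  · exact h.imp (inter_subset_inter_right s) (inter_subset_inter_right s)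

theorem nested_union (h : SimpleTransition s t s' t') : s ∪ t ⊆ s' ∪ t' ∨ s' ∪ t' ⊆ s ∪ t := by
  obtain ⟨rfl, h⟩ | ⟨rfl, h⟩ := h
  · exact h.imp (union_subset_union_left t) (union_subset_union_left t)
  · exact h.imp (union_subset_union_right s) (union_subset_union_right s)

end SimpleTransition

/-- Between any two consecutive columns, at most one of `A` and `B` changes, and it only grows or
only shrinks. -/
def ColumnsInGeneralPosition (A B : Set (ℤ × ℤ)) : Prop :=
  ∀ m, SimpleTransition (Prod.mk m ⁻¹' A) (Prod.mk m ⁻¹' B)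
    (Prod.mk (m + 1) ⁻¹' A) (Prod.mk (m + 1) ⁻¹' B)

theorem ColumnsInGeneralPosition.eq_or_eq {A B : Set (ℤ × ℤ)} (h : ColumnsInGeneralPosition A B)
    {m m' : ℤ} (h₁ : m ≤ m' + 1) (h₂ : m' ≤ m + 1) :
    (∀ n, (m, n) ∈ A ↔ (m', n) ∈ A) ∨ (∀ n, (m, n) ∈ B ↔ (m', n) ∈ B) := by
  suffices Prod.mk m ⁻¹' A = Prod.mk m' ⁻¹' A ∨ Prod.mk m ⁻¹' B = Prod.mk m' ⁻¹' B from
    this.imp Set.ext_iff.1 Set.ext_iff.1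
  rcases (by omega : m = m' ∨ m' = m + 1 ∨ m = m' + 1) with rfl | rfl | rfl
  · exact Or.inl rfl
  · exact (h m).eq_or_eq
  · exact (h m').eq_or_eq.imp Eq.symm Eq.symm

/-- No grid line contains boundary segments of both `A` and `B`, and along each grid line each of
the two sets lies on a single side of its boundary. -/
structure InGeneralPosition (A B : Set (ℤ × ℤ)) : Prop where
  columns : ColumnsInGeneralPosition A B
  rows : ColumnsInGeneralPosition (Prod.swap ⁻¹' A) (Prod.swap ⁻¹' B)

namespace InGeneralPosition

variable {A B : Set (ℤ × ℤ)} {b : ℤ → ℝ} {p q : ℤ × ℤ} {z : Plane}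

theorem symm (h : InGeneralPosition A B) : InGeneralPosition B A :=
  ⟨fun m ↦ (h.columns m).swap, fun m ↦ (h.rows m).swap⟩

theorem wellComposed_left (h : InGeneralPosition A B) : WellComposed A :=
  .of_nested_columns fun m ↦ (h.columns m).nested_left

theorem wellComposed_inter (h : InGeneralPosition A B) : WellComposed (A ∩ B) :=
  .of_nested_columns fun m ↦ (h.columns m).nested_inter

theorem wellComposed_compl_inter_compl (h : InGeneralPosition A B) : WellComposed (Aᶜ ∩ Bᶜ) := by
  rw [← compl_union]
  exact (WellComposed.of_nested_columns (L := A ∪ B) fun m ↦ (h.columns m).nested_union).compl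

theorem mem_iff_mem_or_of_adj4 (h : InGeneralPosition A B) (hpq : Adj4 p q) :
    (p ∈ A ↔ q ∈ A) ∨ (p ∈ B ↔ q ∈ B) := by
  obtain ⟨m, n⟩ := p
  obtain ⟨m', n'⟩ := q
  obtain ⟨rfl : m = m', hn : n' = n + 1 ∨ n = n' + 1⟩ | ⟨rfl : n = n', hm : m' = m + 1 ∨ _⟩ := hpq
  · exact (h.rows.eq_or_eq (m := n) (m' := n') (by omega) (by omega)).imp (· m) (· m)
  · exact (h.columns.eq_or_eq (m := m) (m' := m') (by omega) (by omega)).imp (· n) (· n)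

/- One set agrees on the columns of the two given cells and one agrees on their rows, which puts one
of the four cells spanned by these columns and rows into both sets. -/
theorem mem_cellUnion_inter (h : InGeneralPosition A B) (hb : IsSubdivision b)
    (hA : z ∈ cellUnion b A) (hB : z ∈ cellUnion b B) : z ∈ cellUnion b (A ∩ B) := by
  obtain ⟨⟨m, n⟩, hmnA, hz⟩ := mem_cellUnion.1 hA
  obtain ⟨⟨m', n'⟩, hmnB, hz'⟩ := mem_cellUnion.1 hB
  obtain ⟨h₁, h₂, h₃, h₄⟩ := hb.adj8_of_mem_cell hz hz'
  rw [mem_cellUnion]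
  rcases h.columns.eq_or_eq h₁ h₂ with hcol | hcol <;>
    rcases h.rows.eq_or_eq h₃ h₄ with hrow | hrow
  · exact ⟨(m', n'), ⟨(hrow m').1 ((hcol n).1 hmnA), hmnB⟩, hz'⟩
  · exact ⟨(m', n), ⟨(hcol n).1 hmnA, (hrow m').2 hmnB⟩, hz'.1, hz.2⟩
  · exact ⟨(m, n'), ⟨(hrow m).1 hmnA, (hcol n').2 hmnB⟩, hz.1, hz'.2⟩
  · exact ⟨(m, n), ⟨hmnA, (hcol n).2 ((hrow m').2 hmnB)⟩, hz⟩

end InGeneralPosition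

end GeneralPosition

section RegularComponents

variable {b : ℤ → ℝ} {A B L : Set (ℤ × ℤ)} {z : Plane}

theorem IsSubdivision.mem_cellUnion_of_forall_cell (hb : IsSubdivision b)
    (h : ∀ q, z ∈ cell b q → q ∈ L) : z ∈ cellUnion b L := by
  obtain ⟨q, hq⟩ := hb.exists_mem_cell z
  exact mem_cellUnion.2 ⟨q, h q hq, hq⟩

theorem notMem_cellUnion : z ∉ cellUnion b L ↔ ∀ q, z ∈ cell b q → q ∈ Lᶜ := by
  simp only [mem_cellUnion, not_exists, not_and, mem_compl_iff]
  exact forall_congr' fun q ↦ imp_not_comm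

theorem InGeneralPosition.isRegion_inter (h : InGeneralPosition A B) (hb : IsSubdivision b) :
    IsRegion b (A ∩ B) (cellUnion b A ∩ cellUnion b B) where
  mem_of_forall_cell _ hz := ⟨hb.mem_cellUnion_of_forall_cell fun q hq ↦ (hz q hq).1,
    hb.mem_cellUnion_of_forall_cell fun q hq ↦ (hz q hq).2⟩
  subset_cellUnion _ hz := h.mem_cellUnion_inter hb hz.1 hz.2

theorem IsSubdivision.isRegion_compl_inter_compl (hb : IsSubdivision b) (A B : Set (ℤ × ℤ)) :
    IsRegion b (Aᶜ ∩ Bᶜ) ((cellUnion b A)ᶜ ∩ (cellUnion b B)ᶜ) where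
  mem_of_forall_cell _ hz := ⟨notMem_cellUnion.2 fun q hq ↦ (hz q hq).1,
    notMem_cellUnion.2 fun q hq ↦ (hz q hq).2⟩
  subset_cellUnion _ hz := hb.mem_cellUnion_of_forall_cell fun q hq ↦
    ⟨notMem_cellUnion.1 hz.1 q hq, notMem_cellUnion.1 hz.2 q hq⟩

theorem IsSubdivision.isRegion_inter_compl (hb : IsSubdivision b) (A B : Set (ℤ × ℤ)) :
    IsRegion b (A ∩ Bᶜ) (cellUnion b A ∩ (cellUnion b B)ᶜ) where
  mem_of_forall_cell _ hz := ⟨hb.mem_cellUnion_of_forall_cell fun q hq ↦ (hz q hq).1,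
    notMem_cellUnion.2 fun q hq ↦ (hz q hq).2⟩
  subset_cellUnion z hz := by
    obtain ⟨q, hq, hzq⟩ := mem_cellUnion.1 hz.1
    exact mem_cellUnion.2 ⟨q, ⟨hq, notMem_cellUnion.1 hz.2 q hzq⟩, hzq⟩

/-- Every component of the part of the plane covered by `A` but not by `B` shares a boundary edge
with exactly one component of the part covered by both and with exactly one component of the part
covered by neither. -/
def HasRegularDifference (b : ℤ → ℝ) (A B : Set (ℤ × ℤ)) : Prop :=
  ∀ C, IsCompOf C (cellUnion b A ∩ (cellUnion b B)ᶜ) →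
    (∃! T, IsCompOf T (cellUnion b A ∩ cellUnion b B) ∧ SharesEdge T C) ∧
    (∃! T, IsCompOf T ((cellUnion b A)ᶜ ∩ (cellUnion b B)ᶜ) ∧ SharesEdge T C)

namespace HasRegularDifference

variable {p q : ℤ × ℤ}

theorem existsUnique_inter (h : HasRegularDifference b A B) (hb : IsSubdivision b)
    (hp : p ∈ A ∩ Bᶜ) :
    ∃! T, IsCompOf T (cellUnion b A ∩ cellUnion b B) ∧
      SharesEdge T (componentAt b (cellUnion b A ∩ (cellUnion b B)ᶜ) p) :=
  (h _ ((hb.isRegion_inter_compl A B).isCompOf_componentAt hb hp)).1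

theorem existsUnique_compl_inter_compl (h : HasRegularDifference b A B) (hb : IsSubdivision b)
    (hp : p ∈ A ∩ Bᶜ) :
    ∃! T, IsCompOf T ((cellUnion b A)ᶜ ∩ (cellUnion b B)ᶜ) ∧
      SharesEdge T (componentAt b (cellUnion b A ∩ (cellUnion b B)ᶜ) p) :=
  (h _ ((hb.isRegion_inter_compl A B).isCompOf_componentAt hb hp)).2

theorem exists_pathIn_inter (h : HasRegularDifference b A B) (hb : IsSubdivision b)
    (hAB : InGeneralPosition A B) (hp : p ∈ A) : ∃ q ∈ A ∩ B, PathIn Adj4 A p q := by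
  by_cases hpB : p ∈ B
  · exact ⟨p, ⟨hp, hpB⟩, PathIn.refl p⟩
  · exact (hb.isRegion_inter_compl A B).exists_pathIn_of_sharesEdge (hAB.isRegion_inter hb) hb
      hAB.wellComposed_left inter_subset_left inter_subset_left ⟨hp, hpB⟩
      (h.existsUnique_inter hb ⟨hp, hpB⟩).exists

theorem exists_pathIn_compl_inter (h : HasRegularDifference b A B) (hb : IsSubdivision b)
    (hAB : InGeneralPosition A B) (hp : p ∉ A ∩ B) : ∃ q ∉ A, PathIn Adj4 (A ∩ B)ᶜ p q := by
  by_cases hpA : p ∈ A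
  · have hpF : p ∈ A ∩ Bᶜ := ⟨hpA, fun hpB ↦ hp ⟨hpA, hpB⟩⟩
    obtain ⟨q, hq, hpq⟩ := (hb.isRegion_inter_compl A B).exists_pathIn_of_sharesEdge
      (hb.isRegion_compl_inter_compl A B) hb hAB.wellComposed_inter.compl
      (fun _ hr hr' ↦ hr.2 hr'.2) (fun _ hr hr' ↦ hr.2 hr'.2) hpF
      (h.existsUnique_compl_inter_compl hb hpF).exists
    exact ⟨q, hq.1, hpq⟩
  · exact ⟨p, hpA, PathIn.refl p⟩

theorem pathIn_inter (h : HasRegularDifference b A B) (hb : IsSubdivision b)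
    (hAB : InGeneralPosition A B) (hp : p ∈ A ∩ B) (hq : q ∈ A ∩ B) (hpq : PathIn Adj4 A p q) :
    PathIn Adj4 (A ∩ B) p q := by
  rw [← inter_union_compl A B] at hpq
  refine PathIn.reroute (fun _ _ ↦ Adj4.symm) subset_rfl (fun x hx _ _ _ ↦ hx) ?_
    (fun hpF ↦ hpF.2 hp.2) hq hpq
  intro y hy y' hy' hyy' x hx x' hx' hxy hxy'
  exact (hb.isRegion_inter_compl A B).pathIn_of_existsUnique_sharesEdge (hAB.isRegion_inter hb) hb
    hAB.wellComposed_inter (h.existsUnique_inter hb hy) hy hy' hyy' hx hx' hxy hxy'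

theorem pathIn_compl (h : HasRegularDifference b A B) (hb : IsSubdivision b)
    (hAB : InGeneralPosition A B) (hp : p ∉ A) (hq : q ∉ A) (hpq : PathIn Adj4 (A ∩ B)ᶜ p q) :
    PathIn Adj4 Aᶜ p q := by
  have h_union : (A ∩ B)ᶜ = Aᶜ ∪ (A ∩ Bᶜ) := by
    rw [union_inter_distrib_left, compl_union_self, univ_inter, compl_inter]
  rw [h_union] at hpq
  refine PathIn.reroute (L := Aᶜ ∩ Bᶜ) (fun _ _ ↦ Adj4.symm) inter_subset_left ?_ ?_
    (fun hpF ↦ hp hpF.1) hq hpq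
  · intro x hx y hy hxy
    refine ⟨hx, fun hxB ↦ ?_⟩
    rcases hAB.mem_iff_mem_or_of_adj4 hxy with hA | hB
    · exact hx (hA.2 hy.1)
    · exact hy.2 (hB.1 hxB)
  · intro y hy y' hy' hyy' x hx x' hx' hxy hxy'
    exact (hb.isRegion_inter_compl A B).pathIn_of_existsUnique_sharesEdge
      (hb.isRegion_compl_inter_compl A B) hb hAB.wellComposed_compl_inter_compl
      (h.existsUnique_compl_inter_compl hb hy) hy hy' hyy' hx hx' hxy hxy'

theorem preservesComponents (h : HasRegularDifference b A B) (hb : IsSubdivision b)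
    (hAB : InGeneralPosition A B) : PreservesComponents (A ∩ B) A where
  subset := inter_subset_left
  foreground_surjective x hx := by
    obtain ⟨q, hq, hxq⟩ := h.exists_pathIn_inter hb hAB hx
    exact ⟨q, hq, hxq.adj8⟩
  foreground_injective _ hq _ hq' hqq' :=
    (h.pathIn_inter hb hAB hq hq' (hAB.wellComposed_left.pathIn_adj4_of_adj8 hqq')).adj8
  background_injective _ hp _ hq hpq := h.pathIn_compl hb hAB hp hq hpq
  background_surjective _ hx := h.exists_pathIn_compl_inter hb hAB hx

end HasRegularDifference

end RegularComponents

section Grid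

variable {b : ℤ → ℝ} {S : Set (ℕ × ℕ)} {c d : ℤ}

theorem IsSubdivision.biUnion_Icc (hb : IsSubdivision b) {l r : ℤ} (hlr : l ≤ r) :
    ⋃ m ∈ Icc l r, Icc (b m) (b (m + 1)) = Icc (b l) (b (r + 1)) := by
  have b_mono := hb.strictMono.monotone
  refine Subset.antisymm (iUnion₂_subset fun m hm ↦
    Icc_subset_Icc (b_mono hm.1) (b_mono (add_le_add_left hm.2 1))) ?_
  rintro x ⟨hlx, hxr⟩
  obtain ⟨m, hm⟩ := hb.exists_mem_Ico x
  have hlm := hb.strictMono.lt_iff_lt.1 (hlx.trans_lt hm.2)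
  have hmr := hb.strictMono.le_iff_le.1 (hm.1.trans hxr)
  obtain hmr | rfl : m ≤ r ∨ m = r + 1 := by omega
  · exact mem_biUnion ⟨by omega, hmr⟩ (Ico_subset_Icc_self hm)
  · exact mem_biUnion ⟨hlr, le_rfl⟩ ⟨(b_mono (by omega)).trans hm.1, hxr⟩

theorem IsSubdivision.cellUnion_Icc_prod_Icc (hb : IsSubdivision b) {l r l' r' : ℤ} (hlr : l ≤ r)
    (hlr' : l' ≤ r') : cellUnion b (Icc l r ×ˢ Icc l' r') =
      box (Icc (b l) (b (r + 1))) (Icc (b l') (b (r' + 1))) := by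
  ext z
  simp only [← hb.biUnion_Icc hlr, ← hb.biUnion_Icc hlr', box, mem_cellUnion, cell,
    mem_iUnion, mem_prod, Prod.exists, exists_prop, Set.mem_ofPred_eq]
  tauto

/-- The integers whose unit interval `[m, m + 1]` lies in `[4 i - a, 4 i + b + 1]`, the fourfold
magnification `[4 i - 4, 4 i]` of the `i`-th pixel interval with its end points moved. -/
def fineIndices (a b : ℤ) (i : ℕ) : Set ℤ := Icc (4 * i - a) (4 * i + b)

/-- The image in which every pixel of `S` is replaced by the square of pixels with coordinates in
`fineIndices a b`. -/
def subdivide (a b : ℤ) (S : Set (ℕ × ℕ)) : Set (ℤ × ℤ) :=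
  ⋃ p ∈ S, fineIndices a b p.1 ×ˢ fineIndices a b p.2

theorem finite_subdivide (c d : ℤ) (hS : S.Finite) : (subdivide c d S).Finite :=
  hS.biUnion fun _ _ ↦ (finite_Icc _ _).prod (finite_Icc _ _)

theorem IsSubdivision.cellUnion_subdivide (hb : IsSubdivision b) (hcd : 0 ≤ c + d)
    (S : Set (ℕ × ℕ)) :
    cellUnion b (subdivide c d S) =
      ⋃ p ∈ S, box (Icc (b (4 * (p.1 : ℤ) - c)) (b (4 * (p.1 : ℤ) + d + 1)))
        (Icc (b (4 * (p.2 : ℤ) - c)) (b (4 * (p.2 : ℤ) + d + 1))) := by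
  simp only [subdivide, cellUnion, biUnion_iUnion]
  exact iUnion₂_congr fun p _ ↦ hb.cellUnion_Icc_prod_Icc (by omega) (by omega)

/-- The continuous function that is constant on `[n, n + 3 / 4]` and has slope 4 on
`[n + 3 / 4, n + 1]` for every integer `n`. It pushes the enlarged pixel interval
`[n - 1, n + 3 / 4]` back onto `[n - 1, n]`. -/
def stair (x : ℝ) : ℝ := ⌊x⌋ + max 0 (4 * Int.fract x - 3)

theorem continuous_stair : Continuous stair := by
  have h_fract : Continuous fun x : ℝ ↦ max 0 (4 * Int.fract x - 3) - Int.fract x :=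
    ContinuousOn.comp_fract'' (f := fun t ↦ max 0 (4 * t - 3) - t) (by fun_prop) (by norm_num)
  refine (continuous_id.add h_fract).congr fun x ↦ ?_
  simp only [stair, Pi.add_apply, id_eq]
  linarith [Int.floor_add_fract x]

theorem stair_mem_Icc {n : ℤ} {x : ℝ} (hx : x ∈ Icc (n - 1 : ℝ) (n + 3 / 4)) :
    stair x ∈ Icc (n - 1 : ℝ) n := by
  have h_floor := Int.floor_add_fract x
  have h_nonneg : 0 ≤ max 0 (4 * Int.fract x - 3) := le_max_left _ _
  have h_le : n - 1 ≤ ⌊x⌋ := Int.le_floor.2 (by exact_mod_cast hx.1)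
  have h_le' : (n - 1 : ℝ) ≤ ⌊x⌋ := by exact_mod_cast h_le
  refine ⟨by unfold stair; linarith, ?_⟩
  obtain h_lt | h_ge := lt_or_ge x n
  · have h_lt' : (⌊x⌋ + 1 : ℝ) ≤ n := by exact_mod_cast Int.add_one_le_iff.2 (Int.floor_lt.2 h_lt)
    have h_max : max 0 (4 * Int.fract x - 3) ≤ 1 :=
      max_le zero_le_one (by linarith [Int.fract_lt_one x])
    unfold stair
    linarith
  · have h_eq : ⌊x⌋ = n := Int.floor_eq_iff.2 ⟨h_ge, by linarith [hx.2]⟩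
    rw [h_eq] at h_floor
    rw [stair, h_eq, max_eq_left (by linarith [hx.2]), add_zero]

theorem fg_homotopyEquiv_subdivide (S : Set (ℕ × ℕ)) (hc : c ∈ Icc 3 4) (hd : d ∈ Icc 1 2) :
    Nonempty (ContinuousMap.HomotopyEquiv ↥(fg S) ↥(cellUnion (↑) (subdivide c d S))) := by
  have hc₁ : (3 : ℝ) ≤ c := by exact_mod_cast hc.1
  have hc₂ : (c : ℝ) ≤ 4 := by exact_mod_cast hc.2
  have hd₁ : (1 : ℝ) ≤ d := by exact_mod_cast hd.1
  have hd₂ : (d : ℝ) ≤ 2 := by exact_mod_cast hd.2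
  have hcd : 0 ≤ c + d := by linarith [hc.1, hd.1]
  rw [IsSubdivision.intCast.cellUnion_subdivide hcd]
  refine homotopyEquiv_biUnion_of_convex
    (f := fun z ↦ ![4 * z 0 + 1, 4 * z 1 + 1]) (g := fun z ↦ ![stair (z 0 / 4), stair (z 1 / 4)])
    (fun _ _ ↦ convex_box (convex_Icc _ _) (convex_Icc _ _))
    (fun _ _ ↦ convex_box (convex_Icc _ _) (convex_Icc _ _)) (by fun_prop) ?_ ?_ ?_
  · have := continuous_stair
    fun_prop
  · rintro p - z ⟨⟨h₁, h₂⟩, h₃, h₄⟩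
    refine ⟨⟨?_, ?_⟩, ?_, ?_⟩ <;> push_cast <;> linarith
  · rintro p - z ⟨⟨h₁, h₂⟩, h₃, h₄⟩
    push_cast at h₁ h₂ h₃ h₄
    exact ⟨stair_mem_Icc (n := p.1) ⟨by push_cast; linarith, by push_cast; linarith⟩,
      stair_mem_Icc (n := p.2) ⟨by push_cast; linarith, by push_cast; linarith⟩⟩

theorem swap_preimage_subdivide (c d : ℤ) (S : Set (ℕ × ℕ)) :
    Prod.swap ⁻¹' subdivide c d S = subdivide c d (Prod.swap ⁻¹' S) := by
  ext ⟨m, n⟩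
  simp only [subdivide, mem_preimage, mem_iUnion, mem_prod, Prod.exists, exists_prop,
    Prod.swap_prod_mk]
  rw [exists_comm]
  tauto

theorem column_subdivide_subset {m m' : ℤ}
    (h : ∀ i, m ∈ fineIndices c d i → m' ∈ fineIndices c d i) :
    Prod.mk m ⁻¹' subdivide c d S ⊆ Prod.mk m' ⁻¹' subdivide c d S := by
  intro n hn
  simp only [subdivide, mem_preimage, mem_iUnion, mem_prod, exists_prop] at hn ⊢
  obtain ⟨p, hp, hm, hn⟩ := hn
  exact ⟨p, hp, h p.1 hm, hn⟩

theorem column_subdivide_eq {m m' : ℤ}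
    (h : ∀ i, m ∈ fineIndices c d i ↔ m' ∈ fineIndices c d i) :
    Prod.mk m ⁻¹' subdivide c d S = Prod.mk m' ⁻¹' subdivide c d S :=
  (column_subdivide_subset fun i ↦ (h i).1).antisymm (column_subdivide_subset fun i ↦ (h i).2)

theorem columnsInGeneralPosition_subdivide (P G : Set (ℕ × ℕ)) :
    ColumnsInGeneralPosition (subdivide 3 1 P) (subdivide 4 2 G) := by
  intro m
  rcases (by omega : m % 4 = 0 ∨ m % 4 = 1 ∨ m % 4 = 2 ∨ m % 4 = 3) with hm | hm | hm | hm
  · exact Or.inl ⟨column_subdivide_eq fun i ↦ by simp only [fineIndices, mem_Icc]; omega,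
      Or.inl (column_subdivide_subset fun i ↦ by simp only [fineIndices, mem_Icc]; omega)⟩
  · exact Or.inl ⟨column_subdivide_eq fun i ↦ by simp only [fineIndices, mem_Icc]; omega,
      Or.inr (column_subdivide_subset fun i ↦ by simp only [fineIndices, mem_Icc]; omega)⟩
  · exact Or.inr ⟨column_subdivide_eq fun i ↦ by simp only [fineIndices, mem_Icc]; omega,
      Or.inr (column_subdivide_subset fun i ↦ by simp only [fineIndices, mem_Icc]; omega)⟩
  · exact Or.inr ⟨column_subdivide_eq fun i ↦ by simp only [fineIndices, mem_Icc]; omega,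
      Or.inl (column_subdivide_subset fun i ↦ by simp only [fineIndices, mem_Icc]; omega)⟩

theorem inGeneralPosition_subdivide (P G : Set (ℕ × ℕ)) :
    InGeneralPosition (subdivide 3 1 P) (subdivide 4 2 G) where
  columns := columnsInGeneralPosition_subdivide P G
  rows := by
    simp only [swap_preimage_subdivide]
    exact columnsInGeneralPosition_subdivide _ _

end Grid

section Thickening

variable {S : Set (ℕ × ℕ)} {ε δ : ℝ}

theorem exists_mem_Icc_abs_sub_le_iff {l r t : ℝ} (hlr : l ≤ r) (hδ : 0 ≤ δ) :
    (∃ s ∈ Icc l r, |s - t| ≤ δ) ↔ t ∈ Icc (l - δ) (r + δ) := by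
  simp only [abs_le]
  constructor
  · rintro ⟨s, hs, h₁, h₂⟩
    exact ⟨by linarith [hs.1], by linarith [hs.2]⟩
  · rintro ⟨h₁, h₂⟩
    refine ⟨max l (min r t), ⟨le_max_left _ _, max_le hlr (min_le_left _ _)⟩, ?_, ?_⟩
    · rw [neg_le_sub_iff_le_add, ← sub_le_iff_le_add]
      exact le_max_of_le_right (le_min (by linarith) (by linarith))
    · rw [sub_le_iff_le_add, max_le_iff]
      exact ⟨by linarith, min_le_of_right_le (by linarith)⟩

theorem thick_biUnion {ι : Type*} (δ : ℝ) (s : Set ι) (X : ι → Set Plane) :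
    thick δ (⋃ i ∈ s, X i) = ⋃ i ∈ s, thick δ (X i) := by
  ext y
  simp only [thick, mem_iUnion, exists_prop, Set.mem_ofPred_eq]
  constructor
  · rintro ⟨x, ⟨i, hi, hx⟩, hxy⟩
    exact ⟨i, hi, x, hx, hxy⟩
  · rintro ⟨i, hi, x, hx, hxy⟩
    exact ⟨x, ⟨i, hi, hx⟩, hxy⟩

theorem thick_box_Icc {l r l' r' : ℝ} (hlr : l ≤ r) (hlr' : l' ≤ r') (hδ : 0 ≤ δ) :
    thick δ (box (Icc l r) (Icc l' r')) =
      box (Icc (l - δ) (r + δ)) (Icc (l' - δ) (r' + δ)) := by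
  ext y
  simp only [thick, box, ← exists_mem_Icc_abs_sub_le_iff hlr hδ,
    ← exists_mem_Icc_abs_sub_le_iff hlr' hδ, pi_norm_le_iff_of_nonneg hδ, Fin.forall_fin_two,
    Pi.sub_apply, Real.norm_eq_abs, Set.mem_ofPred_eq]
  constructor
  · rintro ⟨x, ⟨hx₀, hx₁⟩, h₀, h₁⟩
    exact ⟨⟨x 0, hx₀, h₀⟩, x 1, hx₁, h₁⟩
  · rintro ⟨⟨s, hs, h₀⟩, t, ht, h₁⟩
    exact ⟨![s, t], ⟨hs, ht⟩, h₀, h₁⟩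

theorem thick_fg (hδ : 0 ≤ δ) (S : Set (ℕ × ℕ)) :
    thick δ (fg S) = ⋃ p ∈ S, box (Icc ((p.1 : ℝ) - 1 - δ) (p.1 + δ))
      (Icc ((p.2 : ℝ) - 1 - δ) (p.2 + δ)) := by
  rw [fg, thick_biUnion]
  exact iUnion₂_congr fun p _ ↦ thick_box_Icc (by linarith) (by linarith) hδ

/-- The increasing enumeration of the numbers `k - 2 ε`, `k - ε`, `k + ε` and `k + 2 ε` with `k` an
integer: the possible coordinates of edges of an `ε`- or `2 ε`-thickened foreground. -/
def breakpoint (ε : ℝ) (m : ℤ) : ℝ :=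
  (m / 4 : ℤ) +
    if m % 4 = 0 then -(2 * ε) else if m % 4 = 1 then -ε else if m % 4 = 2 then ε else 2 * ε

theorem breakpoint_four_mul (ε : ℝ) (k : ℤ) : breakpoint ε (4 * k) = k - 2 * ε := by
  rw [breakpoint, show 4 * k / 4 = k by omega, if_pos (by omega), sub_eq_add_neg]

theorem breakpoint_four_mul_add_one (ε : ℝ) (k : ℤ) : breakpoint ε (4 * k + 1) = k - ε := by
  rw [breakpoint, show (4 * k + 1) / 4 = k by omega, if_neg (by omega), if_pos (by omega),
    sub_eq_add_neg]

theorem breakpoint_four_mul_add_two (ε : ℝ) (k : ℤ) : breakpoint ε (4 * k + 2) = k + ε := by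
  rw [breakpoint, show (4 * k + 2) / 4 = k by omega, if_neg (by omega), if_neg (by omega),
    if_pos (by omega)]

theorem breakpoint_four_mul_add_three (ε : ℝ) (k : ℤ) :
    breakpoint ε (4 * k + 3) = k + 2 * ε := by
  rw [breakpoint, show (4 * k + 3) / 4 = k by omega, if_neg (by omega), if_neg (by omega),
    if_neg (by omega)]

theorem isSubdivision_breakpoint (hε₀ : 0 < ε) (hε : ε < 1 / 4) :
    IsSubdivision (breakpoint ε) := by
  refine .of_strictMono (strictMono_int_of_lt_succ fun m ↦ ?_) (fun x ↦ ⟨4 * ⌊x⌋, ?_⟩)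
    (fun x ↦ ⟨4 * (⌊x⌋ + 1) + 2, ?_⟩)
  · obtain ⟨k, rfl | rfl | rfl | rfl⟩ :
        ∃ k, m = 4 * k ∨ m = 4 * k + 1 ∨ m = 4 * k + 2 ∨ m = 4 * k + 3 := ⟨m / 4, by omega⟩
    · rw [breakpoint_four_mul, breakpoint_four_mul_add_one]
      linarith
    · rw [breakpoint_four_mul_add_one, add_assoc, one_add_one_eq_two, breakpoint_four_mul_add_two]
      linarith
    · rw [breakpoint_four_mul_add_two, add_assoc, two_add_one_eq_three,
        breakpoint_four_mul_add_three]
      linarith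
    · rw [breakpoint_four_mul_add_three, show 4 * k + 3 + 1 = 4 * (k + 1) by ring,
        breakpoint_four_mul]
      push_cast
      linarith
  · rw [breakpoint_four_mul]
    linarith [Int.floor_le x]
  · rw [breakpoint_four_mul_add_two]
    push_cast
    linarith [Int.lt_floor_add_one x]

theorem thick_fg_eq_cellUnion (hε₀ : 0 < ε) (hε : ε < 1 / 4) (S : Set (ℕ × ℕ)) :
    thick ε (fg S) = cellUnion (breakpoint ε) (subdivide 3 1 S) := by
  have h_left (i : ℕ) : breakpoint ε (4 * i - 3) = i - 1 - ε := by
    rw [show (4 * i - 3 : ℤ) = 4 * (i - 1) + 1 by ring, breakpoint_four_mul_add_one]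
    push_cast
    rfl
  have h_right (i : ℕ) : breakpoint ε (4 * i + 1 + 1) = i + ε :=
    breakpoint_four_mul_add_two ε i
  rw [thick_fg hε₀.le, (isSubdivision_breakpoint hε₀ hε).cellUnion_subdivide (by norm_num)]
  simp only [h_left, h_right]

theorem thick_two_mul_fg_eq_cellUnion (hε₀ : 0 < ε) (hε : ε < 1 / 4) (S : Set (ℕ × ℕ)) :
    thick (2 * ε) (fg S) = cellUnion (breakpoint ε) (subdivide 4 2 S) := by
  have h_left (i : ℕ) : breakpoint ε (4 * i - 4) = i - 1 - 2 * ε := by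
    rw [show (4 * i - 4 : ℤ) = 4 * (i - 1) by ring, breakpoint_four_mul]
    push_cast
    rfl
  have h_right (i : ℕ) : breakpoint ε (4 * i + 2 + 1) = i + 2 * ε :=
    breakpoint_four_mul_add_three ε i
  rw [thick_fg (by positivity), (isSubdivision_breakpoint hε₀ hε).cellUnion_subdivide (by norm_num)]
  simp only [h_left, h_right]

end Thickening

section ZeroLoss

theorem finite_of_onGrid {S : Set (ℕ × ℕ)} {h w : ℕ} (hS : OnGrid S h w) : S.Finite :=
  ((finite_Icc 1 h).prod (finite_Icc 1 w)).subset hS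

variable {P G : Set (ℕ × ℕ)} {ε : ℝ}

theorem hasRegularDifference_left_of_zeroLoss (hε₀ : 0 < ε) (hε : ε < 1 / 4)
    (h : ZeroLoss P G ε) :
    HasRegularDifference (breakpoint ε) (subdivide 3 1 P) (subdivide 4 2 G) := by
  simpa only [HasRegularDifference, RegularComp, FPset, TPset, TNset,
    thick_fg_eq_cellUnion hε₀ hε, thick_two_mul_fg_eq_cellUnion hε₀ hε] using h.1

theorem hasRegularDifference_right_of_zeroLoss (hε₀ : 0 < ε) (hε : ε < 1 / 4)
    (h : ZeroLoss P G ε) :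
    HasRegularDifference (breakpoint ε) (subdivide 4 2 G) (subdivide 3 1 P) := by
  simpa only [HasRegularDifference, RegularComp, FNset, TPset, TNset,
    thick_fg_eq_cellUnion hε₀ hε, thick_two_mul_fg_eq_cellUnion hε₀ hε,
    inter_comm (cellUnion _ (subdivide 3 1 P)), inter_comm (cellUnion _ (subdivide 3 1 P))ᶜ]
    using h.2

end ZeroLoss

end DigitalTopology

open DigitalTopology

/-- Under the zero-loss hypothesis, the unthickened foregrounds `F(P)` and
`F(G)` are homotopy equivalent. -/
theorem zero_loss_foregrounds_homotopyEquiv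
    (h w : ℕ) (P G : Set (ℕ × ℕ)) (hP : OnGrid P h w) (hG : OnGrid G h w)
    (ε : ℝ) (hε0 : 0 < ε) (hε : ε < 1 / 4) (hzero : ZeroLoss P G ε) :
    Nonempty (ContinuousMap.HomotopyEquiv ↥(fg P) ↥(fg G)) := by
  have hb := isSubdivision_breakpoint hε0 hε
  have hPG := inGeneralPosition_subdivide P G
  have hP_inter := (hasRegularDifference_left_of_zeroLoss hε0 hε hzero).preservesComponents hb hPG
  have hG_inter :=
    (hasRegularDifference_right_of_zeroLoss hε0 hε hzero).preservesComponents hb hPG.symm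
  rw [inter_comm] at hG_inter
  obtain ⟨eP⟩ := fg_homotopyEquiv_subdivide P (c := 3) (d := 1) (by simp) (by simp)
  obtain ⟨eG⟩ := fg_homotopyEquiv_subdivide G (c := 4) (d := 2) (by simp) (by simp)
  obtain ⟨fP⟩ := hP_inter.homotopyEquiv (finite_subdivide 3 1 (finite_of_onGrid hP))
  obtain ⟨fG⟩ := hG_inter.homotopyEquiv (finite_subdivide 4 2 (finite_of_onGrid hG))
  exact ⟨(eP.trans fP).trans (eG.trans fG).symm⟩

end
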